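/- arXiv:1702.01139 — 9 statements merged into one kernel-verified Lean document; each statement's English description precedes it below -/
import Mathlib

section
/- Suppose ω is an alternating bilinear form on V₂ that is multiplicative. Then for all a ∈ W₂ and y ∈ W₁ one has C₁₃(a,y) = C₃₂(y, ∂₂ a); explicitly, ω((a,0,0,0),(0,0,y,0)) = ω((0,0,y,0),(0,∂₂ a,0,0)). -/
/-!
Consider `u = (a, 0, 0, 0, 0, 0, 0)` and `v = (0, 0, b, 0, 0, y, 0)` in `V₃`. Since
`f₁ u = f₂ u = 0` and `f₀ v = 0`, multiplicativity leaves only the last face, so that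
`f₃ u = (a, ∂₂ a, 0, 0)` is `ω`-orthogonal to `f₃ v = (b, 0, y, 0)`. Splitting `f₃ u` as
`(a, 0, 0, 0) + (0, ∂₂ a, 0, 0)` and swapping arguments gives the identity.
-/

section FaceMaps

variable {R V V' M : Type*} [CommRing R] [AddCommGroup V] [Module R V]
  [AddCommGroup M] [Module R M] {n : ℕ}

/-- A bilinear form `ω` is multiplicative with respect to the face maps `f₀, …, fₙ₋₁ : V' → V`
if its simplicial coboundary `∑ᵢ (-1)ⁱ fᵢ^* ω` vanishes. The signs are taken in `ℤˣ`, so that they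
act invertibly on every `M`. -/
def IsMultiplicativeForm (f : Fin n → V' → V) (ω : V →ₗ[R] V →ₗ[R] M) : Prop :=
  ∀ u v, ∑ i : Fin n, (-1 : ℤˣ) ^ (i : ℕ) • ω (f i u) (f i v) = 0

theorem IsMultiplicativeForm.apply_face_eq_zero {f : Fin n → V' → V} {ω : V →ₗ[R] V →ₗ[R] M}
    (hω : IsMultiplicativeForm f ω) {u v : V'} (j : Fin n)
    (h : ∀ i ≠ j, ω (f i u) (f i v) = 0) : ω (f j u) (f j v) = 0 := by
  have hsum := hω u v
  rw [Fintype.sum_eq_single j fun i hi ↦ by rw [h i hi, smul_zero]] at hsum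
  exact (smul_eq_zero_iff_eq _).mp hsum

end FaceMaps

section ChainComplex

variable {R W₀ W₁ W₂ M : Type*} [CommRing R] [AddCommGroup W₀] [Module R W₀]
  [AddCommGroup W₁] [Module R W₁] [AddCommGroup W₂] [Module R W₂] [AddCommGroup M] [Module R M]

/-- The face maps `f₀, f₁, f₂, f₃ : V₃ → V₂` attached to `W₂ → W₁ → W₀`, where
`V₃ = W₂ × W₂ × W₂ × W₁ × W₁ × W₁ × W₀` and `V₂ = W₂ × W₁ × W₁ × W₀`. -/
def chainFace (d2 : W₂ →ₗ[R] W₁) (d1 : W₁ →ₗ[R] W₀) :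
    Fin 4 → W₂ × W₂ × W₂ × W₁ × W₁ × W₁ × W₀ → W₂ × W₁ × W₁ × W₀
  | 0, (a, _, _, x, y, _, m) => (a, x, y, m)
  | 1, (_, b, _, x, _, z, m) => (b, x, z, m)
  | 2, (_, _, c, _, y, z, m) => (c, y, z, m)
  | 3, (a, b, c, x, y, z, m) => (c - b + a, d2 a + y - x, d2 b + z - x, m - d1 x)

variable {d2 : W₂ →ₗ[R] W₁} {d1 : W₁ →ₗ[R] W₀}
  {ω : (W₂ × W₁ × W₁ × W₀) →ₗ[R] (W₂ × W₁ × W₁ × W₀) →ₗ[R] M}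

theorem isMultiplicativeForm_chainFace_iff :
    IsMultiplicativeForm (chainFace d2 d1) ω ↔
      ∀ (a b c : W₂) (x y z : W₁) (m : W₀) (a' b' c' : W₂) (x' y' z' : W₁) (m' : W₀),
        ω (a, x, y, m) (a', x', y', m')
        - ω (b, x, z, m) (b', x', z', m')
        + ω (c, y, z, m) (c', y', z', m')
        - ω (c - b + a, d2 a + y - x, d2 b + z - x, m - d1 x)
            (c' - b' + a', d2 a' + y' - x', d2 b' + z' - x', m' - d1 x') = 0 := by
  simp [IsMultiplicativeForm, Fin.sum_univ_four, chainFace, Prod.forall, sub_eq_add_neg,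
    pow_succ, Units.smul_def]

theorem IsMultiplicativeForm.apply_graph_eq_zero
    (hω : IsMultiplicativeForm (chainFace d2 d1) ω) (a b : W₂) (y : W₁) :
    ω (a, d2 a, 0, 0) (b, 0, y, 0) = 0 := by
  let u : W₂ × W₂ × W₂ × W₁ × W₁ × W₁ × W₀ := (a, 0, 0, 0, 0, 0, 0)
  let v : W₂ × W₂ × W₂ × W₁ × W₁ × W₁ × W₀ := (0, 0, b, 0, 0, y, 0)
  have hv₀ : chainFace d2 d1 0 v = 0 := rfl
  have hu₁ : chainFace d2 d1 1 u = 0 := rfl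
  have hu₂ : chainFace d2 d1 2 u = 0 := rfl
  have hu₃ : chainFace d2 d1 3 u = (a, d2 a, 0, 0) := by simp [chainFace, u]
  have hv₃ : chainFace d2 d1 3 v = (b, 0, y, 0) := by simp [chainFace, v]
  rw [← hu₃, ← hv₃]
  refine hω.apply_face_eq_zero 3 fun i hi ↦ ?_
  fin_cases i
  · exact hv₀ ▸ map_zero _
  · exact hu₁ ▸ LinearMap.map_zero₂ ω _
  · exact hu₂ ▸ LinearMap.map_zero₂ ω _
  · exact absurd rfl hi

theorem IsMultiplicativeForm.apply_eq_neg_apply_boundary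
    (hω : IsMultiplicativeForm (chainFace d2 d1) ω) (a b : W₂) (y : W₁) :
    ω (a, 0, 0, 0) (b, 0, y, 0) = -ω (0, d2 a, 0, 0) (b, 0, y, 0) := by
  have hsplit : ((a, d2 a, 0, 0) : W₂ × W₁ × W₁ × W₀) = (a, 0, 0, 0) + (0, d2 a, 0, 0) := by
    simp
  rw [eq_neg_iff_add_eq_zero, ← LinearMap.map_add₂, ← hsplit, hω.apply_graph_eq_zero]

theorem stmt_0_general (hω : IsMultiplicativeForm (chainFace d2 d1) ω) (halt : ω.IsAlt)
    (a : W₂) (y : W₁) : ω (a, 0, 0, 0) (0, 0, y, 0) = ω (0, 0, y, 0) (0, d2 a, 0, 0) := by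
  rw [hω.apply_eq_neg_apply_boundary, halt.neg]

end ChainComplex

/-- For a multiplicative alternating bilinear form `ω` on
`V₂ = W₂ × W₁ × W₁ × W₀`, one has `C₁₃(a,y) = C₃₂(y, ∂₂ a)`. -/
theorem stmt_0
    (W0 W1 W2 : Type*)
    [AddCommGroup W0] [Module ℝ W0]
    [AddCommGroup W1] [Module ℝ W1]
    [AddCommGroup W2] [Module ℝ W2]
    (d2 : W2 →ₗ[ℝ] W1) (d1 : W1 →ₗ[ℝ] W0)
    (hd : ∀ a : W2, d1 (d2 a) = 0)
    (ω : (W2 × W1 × W1 × W0) →ₗ[ℝ] (W2 × W1 × W1 × W0) →ₗ[ℝ] ℝ)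
    (halt : ∀ v, ω v v = 0)
    (hmult : ∀ (a b c : W2) (x y z : W1) (m : W0)
        (a' b' c' : W2) (x' y' z' : W1) (m' : W0),
      ω (a, x, y, m) (a', x', y', m')
      - ω (b, x, z, m) (b', x', z', m')
      + ω (c, y, z, m) (c', y', z', m')
      - ω (c - b + a, d2 a + y - x, d2 b + z - x, m - d1 x)
          (c' - b' + a', d2 a' + y' - x', d2 b' + z' - x', m' - d1 x') = 0) :
    ∀ (a : W2) (y : W1),
      ω (a, 0, 0, 0) (0, 0, y, 0) = ω (0, 0, y, 0) (0, d2 a, 0, 0) := by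
  exact stmt_0_general (isMultiplicativeForm_chainFace_iff.mpr hmult) halt
end

section
/- Suppose ω is an alternating bilinear form on V₂ that is multiplicative. Then for all a ∈ W₂ and x ∈ W₁ one has C₁₂(a,x) = C₃₂(∂₂ a, x); explicitly, ω((a,0,0,0),(0,x,0,0)) = ω((0,0,∂₂ a,0),(0,x,0,0)). -/
/-!
Pair the `b`-direction with the `y`-direction of `V₃`. In each of the faces `f₀`, `f₁`, `f₂` one of
the two vectors vanishes, so multiplicativity says that their `f₃`-faces pair to zero; these are
`(-b, 0, ∂₂ b, 0)` and `(0, y, 0, 0)`.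
-/

section Multiplicative

/-- The space `V₂` of 2-simplices of the simplicial module attached by the Dold-Kan correspondence
to a complex `W₂ → W₁ → W₀`. -/
abbrev TwoSimplex (W₀ W₁ W₂ : Type*) := W₂ × W₁ × W₁ × W₀

/-- The space `V₃` of 3-simplices of the simplicial module attached by the Dold-Kan correspondence
to a complex `W₂ → W₁ → W₀`. -/
abbrev ThreeSimplex (W₀ W₁ W₂ : Type*) := W₂ × W₂ × W₂ × W₁ × W₁ × W₁ × W₀

variable {R W₀ W₁ W₂ M : Type*}

/-- The face map `f₀ : V₃ → V₂`. -/
def face₀ : ThreeSimplex W₀ W₁ W₂ → TwoSimplex W₀ W₁ W₂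
  | (a, _, _, x, y, _, m) => (a, x, y, m)

/-- The face map `f₁ : V₃ → V₂`. -/
def face₁ : ThreeSimplex W₀ W₁ W₂ → TwoSimplex W₀ W₁ W₂
  | (_, b, _, x, _, z, m) => (b, x, z, m)

/-- The face map `f₂ : V₃ → V₂`. -/
def face₂ : ThreeSimplex W₀ W₁ W₂ → TwoSimplex W₀ W₁ W₂
  | (_, _, c, _, y, z, m) => (c, y, z, m)

variable [CommSemiring R] [AddCommGroup W₀] [Module R W₀] [AddCommGroup W₁] [Module R W₁]
  [AddCommGroup W₂] [Module R W₂] [AddCommGroup M] [Module R M]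

/-- The face map `f₃ : V₃ → V₂`. -/
def face₃ (d₂ : W₂ →ₗ[R] W₁) (d₁ : W₁ →ₗ[R] W₀) :
    ThreeSimplex W₀ W₁ W₂ → TwoSimplex W₀ W₁ W₂
  | (a, b, c, x, y, z, m) => (c - b + a, d₂ a + y - x, d₂ b + z - x, m - d₁ x)

/-- A bilinear map on `V₂` is multiplicative if the alternating sum of its pullbacks along the face
maps `V₃ → V₂` vanishes. Values in an arbitrary module are allowed. -/
def IsMultiplicative (d₂ : W₂ →ₗ[R] W₁) (d₁ : W₁ →ₗ[R] W₀)
    (ω : TwoSimplex W₀ W₁ W₂ →ₗ[R] TwoSimplex W₀ W₁ W₂ →ₗ[R] M) : Prop :=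
  ∀ u v : ThreeSimplex W₀ W₁ W₂,
    ω (face₀ u) (face₀ v) - ω (face₁ u) (face₁ v) + ω (face₂ u) (face₂ v)
      - ω (face₃ d₂ d₁ u) (face₃ d₂ d₁ v) = 0

variable {d₂ : W₂ →ₗ[R] W₁} {d₁ : W₁ →ₗ[R] W₀}
  {ω : TwoSimplex W₀ W₁ W₂ →ₗ[R] TwoSimplex W₀ W₁ W₂ →ₗ[R] M}

theorem face₃_b_direction (d₂ : W₂ →ₗ[R] W₁) (d₁ : W₁ →ₗ[R] W₀) (b : W₂) :
    face₃ d₂ d₁ (0, b, 0, 0, 0, 0, 0) = (0, 0, d₂ b, 0) - (b, 0, 0, 0) := by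
  simp [face₃]

theorem face₃_y_direction (d₂ : W₂ →ₗ[R] W₁) (d₁ : W₁ →ₗ[R] W₀) (y : W₁) :
    face₃ d₂ d₁ (0, 0, 0, 0, y, 0, 0) = (0, y, 0, 0) := by
  simp [face₃]

theorem IsMultiplicative.apply_face₃ (hω : IsMultiplicative d₂ d₁ ω)
    (u v : ThreeSimplex W₀ W₁ W₂) :
    ω (face₃ d₂ d₁ u) (face₃ d₂ d₁ v) =
      ω (face₀ u) (face₀ v) - ω (face₁ u) (face₁ v) + ω (face₂ u) (face₂ v) :=
  (sub_eq_zero.mp (hω u v)).symm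

theorem stmt_1_general (hω : IsMultiplicative d₂ d₁ ω) (a : W₂) (x : W₁) :
    ω (a, 0, 0, 0) (0, x, 0, 0) = ω (0, 0, d₂ a, 0) (0, x, 0, 0) := by
  let u : ThreeSimplex W₀ W₁ W₂ := (0, a, 0, 0, 0, 0, 0)
  let v : ThreeSimplex W₀ W₁ W₂ := (0, 0, 0, 0, x, 0, 0)
  have hu₀ : face₀ u = 0 := rfl
  have hv₁ : face₁ v = 0 := rfl
  have hu₂ : face₂ u = 0 := rfl
  have h_face₃ : ω (face₃ d₂ d₁ u) (face₃ d₂ d₁ v) = 0 := by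
    simp only [hω.apply_face₃, hu₀, hv₁, hu₂, map_zero, LinearMap.zero_apply, sub_zero, add_zero]
  rw [face₃_b_direction, face₃_y_direction, map_sub, LinearMap.sub_apply, sub_eq_zero] at h_face₃
  exact h_face₃.symm

end Multiplicative

/-- For a multiplicative alternating bilinear form `ω` on
`V₂ = W₂ × W₁ × W₁ × W₀`, one has `C₁₂(a,x) = C₃₂(∂₂ a, x)`. -/
theorem stmt_1
    (W0 W1 W2 : Type*)
    [AddCommGroup W0] [Module ℝ W0]
    [AddCommGroup W1] [Module ℝ W1]
    [AddCommGroup W2] [Module ℝ W2]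
    (d2 : W2 →ₗ[ℝ] W1) (d1 : W1 →ₗ[ℝ] W0)
    (hd : ∀ a : W2, d1 (d2 a) = 0)
    (ω : (W2 × W1 × W1 × W0) →ₗ[ℝ] (W2 × W1 × W1 × W0) →ₗ[ℝ] ℝ)
    (halt : ∀ v, ω v v = 0)
    (hmult : ∀ (a b c : W2) (x y z : W1) (m : W0)
        (a' b' c' : W2) (x' y' z' : W1) (m' : W0),
      ω (a, x, y, m) (a', x', y', m')
      - ω (b, x, z, m) (b', x', z', m')
      + ω (c, y, z, m) (c', y', z', m')
      - ω (c - b + a, d2 a + y - x, d2 b + z - x, m - d1 x)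
          (c' - b' + a', d2 a' + y' - x', d2 b' + z' - x', m' - d1 x') = 0) :
    ∀ (a : W2) (x : W1),
      ω (a, 0, 0, 0) (0, x, 0, 0) = ω (0, 0, d2 a, 0) (0, x, 0, 0) := by
  have hω : IsMultiplicative d2 d1 ω := fun ⟨a, b, c, x, y, z, m⟩ ⟨a', b', c', x', y', z', m'⟩ ↦
    hmult a b c x y z m a' b' c' x' y' z' m'
  exact stmt_1_general hω
end

section
/- (Leibniz rule for the constant Courant bracket.) For all smooth maps e₁, e₂ : W₀ → W₁ and every smooth function f : W₀ → ℝ, one has ⟦e₁, f·e₂⟧(p) = (ρ(e₁)f)(p)·e₂(p) + f(p)·⟦e₁,e₂⟧(p) for every p ∈ W₀, where f·e₂ denotes the pointwise scalar multiple p ↦ f(p)e₂(p). -/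
/-- The constant Courant bracket of two smooth maps `e₁ e₂ : W₀ → W₁`:
`⟦e₁,e₂⟧(p) = (De₂)ₚ(∂(e₁(p))) − (De₁)ₚ(∂(e₂(p))) + σ(v ↦ ⟨e₂(p), (De₁)ₚ(v)⟩)`. -/
noncomputable def courantBracket
    {W0 W1 : Type*}
    [NormedAddCommGroup W0] [NormedSpace ℝ W0] [FiniteDimensional ℝ W0]
    [NormedAddCommGroup W1] [NormedSpace ℝ W1] [FiniteDimensional ℝ W1]
    (B : W1 →ₗ[ℝ] W1 →ₗ[ℝ] ℝ)
    (d : W1 →L[ℝ] W0)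
    (σ : (W0 →L[ℝ] ℝ) →ₗ[ℝ] W1)
    (e₁ e₂ : W0 → W1) (p : W0) : W1 :=
  fderiv ℝ e₂ p (d (e₁ p)) - fderiv ℝ e₁ p (d (e₂ p)) +
    σ (LinearMap.toContinuousLinearMap
        ((B (e₂ p)) ∘ₗ (fderiv ℝ e₁ p : W0 →ₗ[ℝ] W1)))

/-!
At a point `p`, the bracket `⟦e₁, e₂⟧` is the derivative of `e₂` along `∂(e₁(p))` minus a term that
is linear in the value `e₂(p)`. Replacing `e₂` by `f • e₂` scales the second term by `f(p)`, so the
anomaly `(ρ(e₁)f)(p) • e₂(p)` comes entirely from the product rule applied to the first.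
-/

section TensorialPart

variable {W0 W1 : Type*}
  [NormedAddCommGroup W0] [NormedSpace ℝ W0] [FiniteDimensional ℝ W0]
  [NormedAddCommGroup W1] [NormedSpace ℝ W1]
  (B : W1 →ₗ[ℝ] W1 →ₗ[ℝ] ℝ) (d : W1 →L[ℝ] W0) (σ : (W0 →L[ℝ] ℝ) →ₗ[ℝ] W1)

/-- The tensorial part `w ↦ A (∂ w) - σ (v ↦ ⟨w, A v⟩)` of the constant Courant bracket in its
second argument, where `A` stands for the derivative of the first argument at a point. The sign is
chosen so that the bracket is a directional derivative minus this map. -/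
noncomputable def courantTensorialPart (A : W0 →L[ℝ] W1) : W1 →ₗ[ℝ] W1 :=
  (A ∘L d : W1 →ₗ[ℝ] W1) -
    σ ∘ₗ LinearMap.toContinuousLinearMap.toLinearMap ∘ₗ LinearMap.lcomp ℝ ℝ (A : W0 →ₗ[ℝ] W1) ∘ₗ B

variable [FiniteDimensional ℝ W1] {B d σ} {e₁ e₂ : W0 → W1} {A₁ A₂ : W0 →L[ℝ] W1} {p : W0}

theorem courantBracket_eq_sub_courantTensorialPart
    (he₁ : HasFDerivAt e₁ A₁ p) (he₂ : HasFDerivAt e₂ A₂ p) :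
    courantBracket B d σ e₁ e₂ p = A₂ (d (e₁ p)) - courantTensorialPart B d σ A₁ (e₂ p) := by
  rw [courantBracket, he₁.fderiv, he₂.fderiv]
  exact sub_add _ _ _

end TensorialPart

theorem stmt_10_general {W0 W1 : Type*}
    [NormedAddCommGroup W0] [NormedSpace ℝ W0] [FiniteDimensional ℝ W0]
    [NormedAddCommGroup W1] [NormedSpace ℝ W1] [FiniteDimensional ℝ W1]
    (B : W1 →ₗ[ℝ] W1 →ₗ[ℝ] ℝ) (d : W1 →L[ℝ] W0) (σ : (W0 →L[ℝ] ℝ) →ₗ[ℝ] W1)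
    {e₁ e₂ : W0 → W1} {f : W0 → ℝ} {p : W0}
    (he₁ : DifferentiableAt ℝ e₁ p) (he₂ : DifferentiableAt ℝ e₂ p)
    (hf : DifferentiableAt ℝ f p) :
    courantBracket B d σ e₁ (fun q => f q • e₂ q) p
      = (fderiv ℝ f p (d (e₁ p))) • e₂ p + f p • courantBracket B d σ e₁ e₂ p := by
  let v := d (e₁ p)
  let T := courantTensorialPart B d σ (fderiv ℝ e₁ p)
  have bracket_e₂ : courantBracket B d σ e₁ e₂ p = fderiv ℝ e₂ p v - T (e₂ p) :=
    courantBracket_eq_sub_courantTensorialPart he₁.hasFDerivAt he₂.hasFDerivAt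
  calc courantBracket B d σ e₁ (fun q => f q • e₂ q) p
      = (f p • fderiv ℝ e₂ p v + fderiv ℝ f p v • e₂ p) - T (f p • e₂ p) :=
        courantBracket_eq_sub_courantTensorialPart he₁.hasFDerivAt
          (hf.hasFDerivAt.fun_smul he₂.hasFDerivAt)
    _ = fderiv ℝ f p v • e₂ p + f p • (fderiv ℝ e₂ p v - T (e₂ p)) := by
        rw [map_smul]
        module
    _ = fderiv ℝ f p v • e₂ p + f p • courantBracket B d σ e₁ e₂ p := by rw [bracket_e₂]

/-- Leibniz rule for the constant Courant bracket:
`⟦e₁, f·e₂⟧(p) = (ρ(e₁)f)(p)·e₂(p) + f(p)·⟦e₁,e₂⟧(p)`. -/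
theorem stmt_10
    (W0 W1 : Type*)
    [NormedAddCommGroup W0] [NormedSpace ℝ W0] [FiniteDimensional ℝ W0]
    [NormedAddCommGroup W1] [NormedSpace ℝ W1] [FiniteDimensional ℝ W1]
    (B : W1 →ₗ[ℝ] W1 →ₗ[ℝ] ℝ)
    (hB : ∀ x y : W1, B x y = B y x)
    (d : W1 →L[ℝ] W0)
    (σ : (W0 →L[ℝ] ℝ) →ₗ[ℝ] W1)
    (hσ : ∀ (ξ : W0 →L[ℝ] ℝ) (w : W1), B (σ ξ) w = ξ (d w))
    (hdσ : ∀ ξ : W0 →L[ℝ] ℝ, d (σ ξ) = 0)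
    (e₁ e₂ : W0 → W1) (f : W0 → ℝ)
    (he₁ : ContDiff ℝ (⊤ : ℕ∞) e₁) (he₂ : ContDiff ℝ (⊤ : ℕ∞) e₂)
    (hf : ContDiff ℝ (⊤ : ℕ∞) f) :
    ∀ p : W0,
      courantBracket B d σ e₁ (fun q => f q • e₂ q) p
        = (fderiv ℝ f p (d (e₁ p))) • e₂ p + f p • courantBracket B d σ e₁ e₂ p :=
  fun p => stmt_10_general B d σ (he₁.differentiable (by simp) p)
    (he₂.differentiable (by simp) p) (hf.differentiable (by simp) p)
end

section
/- (Invariance of the pairing under the constant Courant bracket.) For all smooth maps e₁, e₂, e₃ : W₀ → W₁ and every p ∈ W₀, one has (Dg)ₚ(∂(e₁(p))) = ⟨⟦e₁,e₂⟧(p), e₃(p)⟩ + ⟨e₂(p), ⟦e₁,e₃⟧(p)⟩, where g : W₀ → ℝ is the function g(q) = ⟨e₂(q), e₃(q)⟩. -/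
theorem fderiv_bilinear_apply {𝕜 E F G H : Type*}
    [NontriviallyNormedField 𝕜] [CompleteSpace 𝕜]
    [NormedAddCommGroup E] [NormedSpace 𝕜 E]
    [NormedAddCommGroup F] [NormedSpace 𝕜 F] [FiniteDimensional 𝕜 F]
    [NormedAddCommGroup G] [NormedSpace 𝕜 G] [FiniteDimensional 𝕜 G]
    [NormedAddCommGroup H] [NormedSpace 𝕜 H]
    (B : F →ₗ[𝕜] G →ₗ[𝕜] H) {f : E → F} {g : E → G} {p : E}
    (hf : DifferentiableAt 𝕜 f p) (hg : DifferentiableAt 𝕜 g p) (v : E) :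
    fderiv 𝕜 (fun q => B (f q) (g q)) p v
      = B (fderiv 𝕜 f p v) (g p) + B (f p) (fderiv 𝕜 g p v) := by
  change fderiv 𝕜 (fun q => B.toContinuousBilinearMap (f q) (g q)) p v = _
  rw [B.toContinuousBilinearMap.fderiv_of_bilinear hf hg, add_comm]
  rfl

section CourantBracket

variable {W0 W1 : Type*}
  [NormedAddCommGroup W0] [NormedSpace ℝ W0] [FiniteDimensional ℝ W0]
  [NormedAddCommGroup W1] [NormedSpace ℝ W1] [FiniteDimensional ℝ W1]
  {B : W1 →ₗ[ℝ] W1 →ₗ[ℝ] ℝ} {d : W1 →L[ℝ] W0} {σ : (W0 →L[ℝ] ℝ) →ₗ[ℝ] W1}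

theorem pairing_courantBracket_left (hσ : ∀ (ξ : W0 →L[ℝ] ℝ) (w : W1), B (σ ξ) w = ξ (d w))
    (e₁ e₂ : W0 → W1) (p : W0) (w : W1) :
    B (courantBracket B d σ e₁ e₂ p) w
      = B (fderiv ℝ e₂ p (d (e₁ p))) w - B (fderiv ℝ e₁ p (d (e₂ p))) w
        + B (e₂ p) (fderiv ℝ e₁ p (d w)) := by
  simp [courantBracket, hσ]

theorem pairing_courantBracket_right (hB : ∀ x y : W1, B x y = B y x)
    (hσ : ∀ (ξ : W0 →L[ℝ] ℝ) (w : W1), B (σ ξ) w = ξ (d w))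
    (e₁ e₂ : W0 → W1) (p : W0) (w : W1) :
    B w (courantBracket B d σ e₁ e₂ p)
      = B w (fderiv ℝ e₂ p (d (e₁ p))) - B w (fderiv ℝ e₁ p (d (e₂ p)))
        + B (e₂ p) (fderiv ℝ e₁ p (d w)) := by
  rw [hB w, pairing_courantBracket_left hσ, hB _ w, hB _ w]

theorem stmt_11_general (hB : ∀ x y : W1, B x y = B y x)
    (hσ : ∀ (ξ : W0 →L[ℝ] ℝ) (w : W1), B (σ ξ) w = ξ (d w))
    {e₁ e₂ e₃ : W0 → W1} {p : W0} (_he₁ : DifferentiableAt ℝ e₁ p)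
    (he₂ : DifferentiableAt ℝ e₂ p) (he₃ : DifferentiableAt ℝ e₃ p) :
    fderiv ℝ (fun q => B (e₂ q) (e₃ q)) p (d (e₁ p))
      = B (courantBracket B d σ e₁ e₂ p) (e₃ p)
        + B (e₂ p) (courantBracket B d σ e₁ e₃ p) := by
  rw [fderiv_bilinear_apply B he₂ he₃, pairing_courantBracket_left hσ,
    pairing_courantBracket_right hB hσ, hB (fderiv ℝ e₁ p (d (e₂ p))) (e₃ p)]
  ring

end CourantBracket

/-- invariance of the pairing under the constant Courant bracket:
`ρ(e₁)(⟨e₂,e₃⟩)(p) = ⟨⟦e₁,e₂⟧(p), e₃(p)⟩ + ⟨e₂(p), ⟦e₁,e₃⟧(p)⟩`. -/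
theorem stmt_11
    (W0 W1 : Type*)
    [NormedAddCommGroup W0] [NormedSpace ℝ W0] [FiniteDimensional ℝ W0]
    [NormedAddCommGroup W1] [NormedSpace ℝ W1] [FiniteDimensional ℝ W1]
    (B : W1 →ₗ[ℝ] W1 →ₗ[ℝ] ℝ)
    (hB : ∀ x y : W1, B x y = B y x)
    (d : W1 →L[ℝ] W0)
    (σ : (W0 →L[ℝ] ℝ) →ₗ[ℝ] W1)
    (hσ : ∀ (ξ : W0 →L[ℝ] ℝ) (w : W1), B (σ ξ) w = ξ (d w))
    (hdσ : ∀ ξ : W0 →L[ℝ] ℝ, d (σ ξ) = 0)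
    (e₁ e₂ e₃ : W0 → W1)
    (he₁ : ContDiff ℝ (⊤ : ℕ∞) e₁) (he₂ : ContDiff ℝ (⊤ : ℕ∞) e₂)
    (he₃ : ContDiff ℝ (⊤ : ℕ∞) e₃) :
    ∀ p : W0,
      fderiv ℝ (fun q => B (e₂ q) (e₃ q)) p (d (e₁ p))
        = B (courantBracket B d σ e₁ e₂ p) (e₃ p)
          + B (e₂ p) (courantBracket B d σ e₁ e₃ p) := by
  intro p
  exact stmt_11_general hB hσ (he₁.differentiable (by simp) p)
    (he₂.differentiable (by simp) p) (he₃.differentiable (by simp) p)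
end

section
/- (Jacobi identity in Leibniz form for the constant Courant bracket.) For all smooth maps e₁, e₂, e₃ : W₀ → W₁ and every p ∈ W₀, one has ⟦⟦e₁,e₂⟧, e₃⟧(p) = ⟦e₁, ⟦e₂,e₃⟧⟧(p) − ⟦e₂, ⟦e₁,e₃⟧⟧(p). -/
section OneForms

open VectorField

variable {𝕜 : Type*} [NontriviallyNormedField 𝕜]
  {E F G : Type*} [NormedAddCommGroup E] [NormedSpace 𝕜 E] [NormedAddCommGroup F] [NormedSpace 𝕜 F]
  [NormedAddCommGroup G] [NormedSpace 𝕜 G]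
  {X Y : E → E} {f g : E → F} {p : E}

lemma fderiv_continuousLinearMap_comp (L : F →L[𝕜] G) (hf : DifferentiableAt 𝕜 f p) :
    fderiv 𝕜 (L ∘ f) p = L.comp (fderiv 𝕜 f p) :=
  (L.hasFDerivAt.comp p hf.hasFDerivAt).fderiv

variable (𝕜) in
/-- The flat covariant derivative `∇_X f` of a vector-valued function `f` along a vector field `X`,
that is, the directional derivative of `f` at each point in the direction of `X`. -/
noncomputable def dirDeriv (X : E → E) (f : E → F) (p : E) : F :=
  fderiv 𝕜 f p (X p)

/-- The Lie derivative `L_X α` of a (vector-valued) one-form `α` along a vector field `X`. -/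
noncomputable def lieDerivOneForm (X : E → E) (α : E → E →L[𝕜] G) (p : E) : E →L[𝕜] G :=
  fderiv 𝕜 α p (X p) + (α p).comp (fderiv 𝕜 X p)

/-- The exterior derivative `dα` of a (vector-valued) one-form `α`, as a curried bilinear map:
`dα(u, v) = (D_u α)(v) - (D_v α)(u)`. Currying makes the contraction `ι_X dα` an application. -/
noncomputable def extDerivOneForm (α : E → E →L[𝕜] G) (p : E) : E →L[𝕜] E →L[𝕜] G :=
  fderiv 𝕜 α p - (fderiv 𝕜 α p).flip

/-- The one-form `⟨g, Df⟩ : v ↦ ⟨g, D_v f⟩` of a continuous bilinear pairing `B` and two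
vector-valued functions. -/
noncomputable def pairingForm (B : F →L[𝕜] F →L[𝕜] G) (f g : E → F) (p : E) : E →L[𝕜] G :=
  (B (g p)).comp (fderiv 𝕜 f p)

lemma differentiableAt_fderiv (hf : ContDiffAt 𝕜 2 f p) : DifferentiableAt 𝕜 (fderiv 𝕜 f) p :=
  (hf.fderiv_right one_add_one_eq_two.le).differentiableAt one_ne_zero

lemma hasFDerivAt_dirDeriv (hX : DifferentiableAt 𝕜 X p)
    (hf : DifferentiableAt 𝕜 (fderiv 𝕜 f) p) :
    HasFDerivAt (dirDeriv 𝕜 X f)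
      ((fderiv 𝕜 f p).comp (fderiv 𝕜 X p) + (fderiv 𝕜 (fderiv 𝕜 f) p).flip (X p)) p :=
  hf.hasFDerivAt.clm_apply hX.hasFDerivAt

lemma differentiableAt_dirDeriv (hX : DifferentiableAt 𝕜 X p)
    (hf : DifferentiableAt 𝕜 (fderiv 𝕜 f) p) : DifferentiableAt 𝕜 (dirDeriv 𝕜 X f) p :=
  (hasFDerivAt_dirDeriv hX hf).differentiableAt

lemma dirDeriv_sub_right (hf : DifferentiableAt 𝕜 f p) (hg : DifferentiableAt 𝕜 g p) :
    dirDeriv 𝕜 X (f - g) p = dirDeriv 𝕜 X f p - dirDeriv 𝕜 X g p := by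
  simp only [dirDeriv, fderiv_sub hf hg, sub_apply]

lemma dirDeriv_lieBracket (hX : DifferentiableAt 𝕜 X p) (hY : DifferentiableAt 𝕜 Y p)
    (hf : DifferentiableAt 𝕜 (fderiv 𝕜 f) p) (hsymm : IsSymmSndFDerivAt 𝕜 f p) :
    dirDeriv 𝕜 (lieBracket 𝕜 X Y) f p =
      dirDeriv 𝕜 X (dirDeriv 𝕜 Y f) p - dirDeriv 𝕜 Y (dirDeriv 𝕜 X f) p := by
  rw [dirDeriv, dirDeriv, dirDeriv, (hasFDerivAt_dirDeriv hX hf).fderiv,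
    (hasFDerivAt_dirDeriv hY hf).fderiv]
  simp only [lieBracket, map_sub, add_apply, ContinuousLinearMap.comp_apply,
    ContinuousLinearMap.flip_apply, hsymm.eq (X p) (Y p)]
  abel

variable {B : F →L[𝕜] F →L[𝕜] G}

lemma pairingForm_sub_left (hf : DifferentiableAt 𝕜 f p) (hg : DifferentiableAt 𝕜 g p)
    (h : E → F) :
    pairingForm B (f - g) h p = pairingForm B f h p - pairingForm B g h p := by
  simp only [pairingForm, fderiv_sub hf hg, ContinuousLinearMap.comp_sub]

lemma pairingForm_sub_right (f g h : E → F) :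
    pairingForm B f (g - h) p = pairingForm B f g p - pairingForm B f h p := by
  simp only [pairingForm, Pi.sub_apply, map_sub, ContinuousLinearMap.sub_comp]

lemma differentiableAt_pairingForm (hf : DifferentiableAt 𝕜 (fderiv 𝕜 f) p)
    (hg : DifferentiableAt 𝕜 g p) : DifferentiableAt 𝕜 (pairingForm B f g) p :=
  (B.differentiableAt.comp p hg).clm_comp hf

lemma fderiv_pairingForm_apply (hf : DifferentiableAt 𝕜 (fderiv 𝕜 f) p)
    (hg : DifferentiableAt 𝕜 g p) (u v : E) :
    fderiv 𝕜 (pairingForm B f g) p u v =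
      B (g p) (fderiv 𝕜 (fderiv 𝕜 f) p u v) + B (fderiv 𝕜 g p u) (fderiv 𝕜 f p v) := by
  have hproduct := fderiv_clm_comp (B.differentiableAt.comp p hg) hf
  rw [fderiv_continuousLinearMap_comp B hg] at hproduct
  exact DFunLike.congr_fun (DFunLike.congr_fun hproduct u) v

lemma lieDerivOneForm_pairingForm (hX : DifferentiableAt 𝕜 X p)
    (hf : DifferentiableAt 𝕜 (fderiv 𝕜 f) p) (hsymm : IsSymmSndFDerivAt 𝕜 f p)
    (hg : DifferentiableAt 𝕜 g p) :
    lieDerivOneForm X (pairingForm B f g) p =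
      pairingForm B (dirDeriv 𝕜 X f) g p + pairingForm B f (dirDeriv 𝕜 X g) p := by
  ext v
  simp only [lieDerivOneForm, add_apply, fderiv_pairingForm_apply hf hg, pairingForm,
    (hasFDerivAt_dirDeriv hX hf).fderiv, ContinuousLinearMap.comp_apply,
    ContinuousLinearMap.flip_apply, map_add, dirDeriv, hsymm.eq (X p) v]
  abel

lemma extDerivOneForm_pairingForm (hB : ∀ x y, B x y = B y x)
    (hf : DifferentiableAt 𝕜 (fderiv 𝕜 f) p) (hsymm : IsSymmSndFDerivAt 𝕜 f p)
    (hg : DifferentiableAt 𝕜 g p) :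
    extDerivOneForm (pairingForm B f g) p (X p) =
      pairingForm B f (dirDeriv 𝕜 X g) p - pairingForm B g (dirDeriv 𝕜 X f) p := by
  ext v
  simp only [extDerivOneForm, sub_apply, ContinuousLinearMap.flip_apply,
    fderiv_pairingForm_apply hf hg, pairingForm, ContinuousLinearMap.comp_apply, dirDeriv,
    hsymm.eq (X p) v, hB (fderiv 𝕜 g p v)]
  abel

end OneForms

section CourantBracket

open VectorField
open scoped ContDiff

variable {𝕜 : Type*} [NontriviallyNormedField 𝕜]
  {E F : Type*} [NormedAddCommGroup E] [NormedSpace 𝕜 E] [NormedAddCommGroup F] [NormedSpace 𝕜 F]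
  {B : F →L[𝕜] F →L[𝕜] 𝕜} {d : F →L[𝕜] E} {σ : (E →L[𝕜] 𝕜) →L[𝕜] F}
  {e e₁ e₂ e₃ : E → F} {α : E → E →L[𝕜] 𝕜} {p : E}

/-- The bracket `∇_{∂e₁} e₂ - ∇_{∂e₂} e₁` of `F`-valued functions on `E` induced by a linear anchor
`∂ : F → E`; for `∂ = id` it is the Lie bracket of vector fields. -/
noncomputable def anchoredBracket (d : F →L[𝕜] E) (e₁ e₂ : E → F) : E → F :=
  dirDeriv 𝕜 (d ∘ e₁) e₂ - dirDeriv 𝕜 (d ∘ e₂) e₁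

/-- The constant Courant bracket over arbitrary normed spaces. The pairing and `σ` are required to
be continuous, which is automatic in the finite-dimensional `courantBracket`. -/
noncomputable def normedCourantBracket (B : F →L[𝕜] F →L[𝕜] 𝕜) (d : F →L[𝕜] E)
    (σ : (E →L[𝕜] 𝕜) →L[𝕜] F) (e₁ e₂ : E → F) : E → F :=
  anchoredBracket d e₁ e₂ + σ ∘ pairingForm B e₁ e₂

lemma anchoredBracket_apply (e₁ e₂ : E → F) (p : E) :
    anchoredBracket d e₁ e₂ p = dirDeriv 𝕜 (d ∘ e₁) e₂ p - dirDeriv 𝕜 (d ∘ e₂) e₁ p :=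
  rfl

lemma normedCourantBracket_apply (e₁ e₂ : E → F) (p : E) :
    normedCourantBracket B d σ e₁ e₂ p = anchoredBracket d e₁ e₂ p + σ (pairingForm B e₁ e₂ p) :=
  rfl

lemma differentiableAt_dirDeriv_anchor (h₁ : DifferentiableAt 𝕜 e₁ p)
    (h₂ : ContDiffAt 𝕜 2 e₂ p) : DifferentiableAt 𝕜 (dirDeriv 𝕜 (d ∘ e₁) e₂) p :=
  differentiableAt_dirDeriv (d.differentiableAt.comp p h₁) (differentiableAt_fderiv h₂)

lemma differentiableAt_anchoredBracket (h₁ : ContDiffAt 𝕜 2 e₁ p) (h₂ : ContDiffAt 𝕜 2 e₂ p) :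
    DifferentiableAt 𝕜 (anchoredBracket d e₁ e₂) p :=
  (differentiableAt_dirDeriv_anchor (h₁.differentiableAt two_ne_zero) h₂).sub
    (differentiableAt_dirDeriv_anchor (h₂.differentiableAt two_ne_zero) h₁)

lemma map_anchoredBracket (h₁ : DifferentiableAt 𝕜 e₁ p) (h₂ : DifferentiableAt 𝕜 e₂ p) :
    d (anchoredBracket d e₁ e₂ p) = lieBracket 𝕜 (d ∘ e₁) (d ∘ e₂) p := by
  rw [lieBracket, fderiv_continuousLinearMap_comp d h₁, fderiv_continuousLinearMap_comp d h₂]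
  exact map_sub d _ _

lemma dirDeriv_anchoredBracket (X : E → E) (h₁ : ContDiffAt 𝕜 2 e₁ p)
    (h₂ : ContDiffAt 𝕜 2 e₂ p) :
    dirDeriv 𝕜 X (anchoredBracket d e₁ e₂) p =
      dirDeriv 𝕜 X (dirDeriv 𝕜 (d ∘ e₁) e₂) p - dirDeriv 𝕜 X (dirDeriv 𝕜 (d ∘ e₂) e₁) p :=
  dirDeriv_sub_right (differentiableAt_dirDeriv_anchor (h₁.differentiableAt two_ne_zero) h₂)
    (differentiableAt_dirDeriv_anchor (h₂.differentiableAt two_ne_zero) h₁)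

lemma dirDeriv_comp_anchoredBracket (h₁ : DifferentiableAt 𝕜 e₁ p)
    (h₂ : DifferentiableAt 𝕜 e₂ p) (he : DifferentiableAt 𝕜 (fderiv 𝕜 e) p)
    (hsymm : IsSymmSndFDerivAt 𝕜 e p) :
    dirDeriv 𝕜 (d ∘ anchoredBracket d e₁ e₂) e p =
      dirDeriv 𝕜 (d ∘ e₁) (dirDeriv 𝕜 (d ∘ e₂) e) p -
        dirDeriv 𝕜 (d ∘ e₂) (dirDeriv 𝕜 (d ∘ e₁) e) p := by
  rw [← dirDeriv_lieBracket (d.differentiableAt.comp p h₁) (d.differentiableAt.comp p h₂) he hsymm,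
    dirDeriv, dirDeriv, Function.comp_apply, map_anchoredBracket h₁ h₂]

lemma anchoredBracket_jacobi (h₁ : ContDiffAt 𝕜 2 e₁ p) (h₂ : ContDiffAt 𝕜 2 e₂ p)
    (h₃ : ContDiffAt 𝕜 2 e₃ p) (hsymm₁ : IsSymmSndFDerivAt 𝕜 e₁ p)
    (hsymm₂ : IsSymmSndFDerivAt 𝕜 e₂ p) (hsymm₃ : IsSymmSndFDerivAt 𝕜 e₃ p) :
    anchoredBracket d (anchoredBracket d e₁ e₂) e₃ p =
      anchoredBracket d e₁ (anchoredBracket d e₂ e₃) p -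
        anchoredBracket d e₂ (anchoredBracket d e₁ e₃) p := by
  have h₁' := h₁.differentiableAt two_ne_zero
  have h₂' := h₂.differentiableAt two_ne_zero
  have h₃' := h₃.differentiableAt two_ne_zero
  simp only [anchoredBracket_apply _ (anchoredBracket d _ _),
    anchoredBracket_apply (anchoredBracket d _ _),
    dirDeriv_anchoredBracket _ h₁ h₂, dirDeriv_anchoredBracket _ h₂ h₃,
    dirDeriv_anchoredBracket _ h₁ h₃,
    dirDeriv_comp_anchoredBracket h₁' h₂' (differentiableAt_fderiv h₃) hsymm₃,
    dirDeriv_comp_anchoredBracket h₂' h₃' (differentiableAt_fderiv h₁) hsymm₁,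
    dirDeriv_comp_anchoredBracket h₁' h₃' (differentiableAt_fderiv h₂) hsymm₂]
  abel

lemma pairingForm_jacobi (hB : ∀ x y, B x y = B y x) (h₁ : ContDiffAt 𝕜 2 e₁ p)
    (h₂ : ContDiffAt 𝕜 2 e₂ p) (h₃ : DifferentiableAt 𝕜 e₃ p)
    (hsymm₁ : IsSymmSndFDerivAt 𝕜 e₁ p) (hsymm₂ : IsSymmSndFDerivAt 𝕜 e₂ p) :
    pairingForm B (anchoredBracket d e₁ e₂) e₃ p -
        extDerivOneForm (pairingForm B e₁ e₂) p (d (e₃ p)) =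
      pairingForm B e₁ (anchoredBracket d e₂ e₃) p +
          lieDerivOneForm (d ∘ e₁) (pairingForm B e₂ e₃) p -
        (pairingForm B e₂ (anchoredBracket d e₁ e₃) p +
          lieDerivOneForm (d ∘ e₂) (pairingForm B e₁ e₃) p) := by
  have h₁' := differentiableAt_fderiv h₁
  have h₂' := differentiableAt_fderiv h₂
  have hd₁ := d.differentiableAt.comp p (h₁.differentiableAt two_ne_zero)
  have hd₂ := d.differentiableAt.comp p (h₂.differentiableAt two_ne_zero)
  have hext : extDerivOneForm (pairingForm B e₁ e₂) p (d (e₃ p)) =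
      pairingForm B e₁ (dirDeriv 𝕜 (d ∘ e₃) e₂) p -
        pairingForm B e₂ (dirDeriv 𝕜 (d ∘ e₃) e₁) p :=
    extDerivOneForm_pairingForm (X := d ∘ e₃) hB h₁' hsymm₁ (h₂.differentiableAt two_ne_zero)
  rw [hext, lieDerivOneForm_pairingForm hd₁ h₂' hsymm₂ h₃,
    lieDerivOneForm_pairingForm hd₂ h₁' hsymm₁ h₃]
  simp only [anchoredBracket, pairingForm_sub_right,
    pairingForm_sub_left (differentiableAt_dirDeriv hd₁ h₂') (differentiableAt_dirDeriv hd₂ h₁')]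
  abel

lemma fderiv_add_sigma_comp (he : DifferentiableAt 𝕜 e p) (hα : DifferentiableAt 𝕜 α p) :
    fderiv 𝕜 (e + σ ∘ α) p = fderiv 𝕜 e p + σ.comp (fderiv 𝕜 α p) := by
  rw [fderiv_add he (σ.differentiableAt.comp p hα), fderiv_continuousLinearMap_comp σ hα]

lemma normedCourantBracket_add_sigma_left (hB : ∀ x y, B x y = B y x)
    (hσ : ∀ ξ w, B (σ ξ) w = ξ (d w)) (hdσ : ∀ ξ, d (σ ξ) = 0)
    (he : DifferentiableAt 𝕜 e p) (hα : DifferentiableAt 𝕜 α p) (f : E → F) :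
    normedCourantBracket B d σ (e + σ ∘ α) f p =
      normedCourantBracket B d σ e f p - σ (extDerivOneForm α p (d (f p))) := by
  have hpair : pairingForm B (e + σ ∘ α) f p =
      pairingForm B e f p + (fderiv 𝕜 α p).flip (d (f p)) := by
    ext v
    simp only [pairingForm, fderiv_add_sigma_comp he hα, ContinuousLinearMap.comp_apply,
      add_apply, map_add, hB (f p) (σ _), hσ, ContinuousLinearMap.flip_apply]
  simp only [normedCourantBracket_apply, anchoredBracket_apply, dirDeriv, hpair,
    fderiv_add_sigma_comp he hα, extDerivOneForm, Function.comp_apply, Pi.add_apply, map_add,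
    hdσ, add_zero, add_apply, sub_apply, map_sub, ContinuousLinearMap.comp_apply]
  abel

lemma normedCourantBracket_add_sigma_right
    (hσ : ∀ ξ w, B (σ ξ) w = ξ (d w)) (hdσ : ∀ ξ, d (σ ξ) = 0) {f : E → F}
    (hf : DifferentiableAt 𝕜 f p) (he : DifferentiableAt 𝕜 e p) (hα : DifferentiableAt 𝕜 α p) :
    normedCourantBracket B d σ f (e + σ ∘ α) p =
      normedCourantBracket B d σ f e p + σ (lieDerivOneForm (d ∘ f) α p) := by
  have hpair : pairingForm B f (e + σ ∘ α) p =
      pairingForm B f e p + (α p).comp (fderiv 𝕜 (d ∘ f) p) := by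
    ext v
    simp only [pairingForm, fderiv_continuousLinearMap_comp d hf, ContinuousLinearMap.comp_apply,
      Pi.add_apply, Function.comp_apply, map_add, add_apply, hσ]
  simp only [normedCourantBracket_apply, anchoredBracket_apply, dirDeriv, hpair,
    fderiv_add_sigma_comp he hα, lieDerivOneForm, Function.comp_apply, Pi.add_apply, map_add,
    hdσ, add_zero, add_apply, ContinuousLinearMap.comp_apply]
  abel

theorem stmt_12_general {n : ℕ∞ω} (hn : minSmoothness 𝕜 2 ≤ n) (hB : ∀ x y, B x y = B y x)
    (hσ : ∀ ξ w, B (σ ξ) w = ξ (d w)) (hdσ : ∀ ξ, d (σ ξ) = 0)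
    (h₁ : ContDiffAt 𝕜 n e₁ p) (h₂ : ContDiffAt 𝕜 n e₂ p) (h₃ : ContDiffAt 𝕜 n e₃ p) :
    normedCourantBracket B d σ (normedCourantBracket B d σ e₁ e₂) e₃ p =
      normedCourantBracket B d σ e₁ (normedCourantBracket B d σ e₂ e₃) p -
        normedCourantBracket B d σ e₂ (normedCourantBracket B d σ e₁ e₃) p := by
  have hsymm {e : E → F} (h : ContDiffAt 𝕜 n e p) : IsSymmSndFDerivAt 𝕜 e p :=
    h.isSymmSndFDerivAt hn
  have h₁' := h₁.of_le (le_minSmoothness.trans hn)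
  have h₂' := h₂.of_le (le_minSmoothness.trans hn)
  have h₃' := h₃.of_le (le_minSmoothness.trans hn)
  have hdiff {e : E → F} (h : ContDiffAt 𝕜 2 e p) : DifferentiableAt 𝕜 e p :=
    h.differentiableAt two_ne_zero
  have hform {e f : E → F} (he : ContDiffAt 𝕜 2 e p) (hf : ContDiffAt 𝕜 2 f p) :
      DifferentiableAt 𝕜 (pairingForm B e f) p :=
    differentiableAt_pairingForm (differentiableAt_fderiv he) (hdiff hf)
  have hleft : normedCourantBracket B d σ (normedCourantBracket B d σ e₁ e₂) e₃ p =
      normedCourantBracket B d σ (anchoredBracket d e₁ e₂) e₃ p -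
        σ (extDerivOneForm (pairingForm B e₁ e₂) p (d (e₃ p))) :=
    normedCourantBracket_add_sigma_left hB hσ hdσ (differentiableAt_anchoredBracket h₁' h₂')
      (hform h₁' h₂') e₃
  have hright {e f g : E → F} (he : ContDiffAt 𝕜 2 e p) (hf : ContDiffAt 𝕜 2 f p)
      (hg : ContDiffAt 𝕜 2 g p) :
      normedCourantBracket B d σ e (normedCourantBracket B d σ f g) p =
        normedCourantBracket B d σ e (anchoredBracket d f g) p +
          σ (lieDerivOneForm (d ∘ e) (pairingForm B f g) p) :=
    normedCourantBracket_add_sigma_right hσ hdσ (hdiff he)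
      (differentiableAt_anchoredBracket hf hg) (hform hf hg)
  have hforms := congrArg σ
    (pairingForm_jacobi (d := d) hB h₁' h₂' (hdiff h₃') (hsymm h₁) (hsymm h₂))
  simp only [map_add, map_sub] at hforms
  rw [hleft, hright h₁' h₂' h₃', hright h₂' h₁' h₃', normedCourantBracket_apply,
    normedCourantBracket_apply, normedCourantBracket_apply,
    anchoredBracket_jacobi h₁' h₂' h₃' (hsymm h₁) (hsymm h₂) (hsymm h₃)]
  linear_combination (norm := module) hforms

end CourantBracket

lemma courantBracket_eq_normedCourantBracket {W0 W1 : Type*}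
    [NormedAddCommGroup W0] [NormedSpace ℝ W0] [FiniteDimensional ℝ W0]
    [NormedAddCommGroup W1] [NormedSpace ℝ W1] [FiniteDimensional ℝ W1]
    (B : W1 →ₗ[ℝ] W1 →ₗ[ℝ] ℝ) (d : W1 →L[ℝ] W0) (σ : (W0 →L[ℝ] ℝ) →ₗ[ℝ] W1)
    (e₁ e₂ : W0 → W1) :
    courantBracket B d σ e₁ e₂ =
      normedCourantBracket B.toContinuousBilinearMap d (LinearMap.toContinuousLinearMap σ) e₁ e₂ :=
  rfl

/-- Jacobi identity in Leibniz form for the constant Courant bracket: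
`⟦⟦e₁,e₂⟧, e₃⟧ = ⟦e₁, ⟦e₂,e₃⟧⟧ − ⟦e₂, ⟦e₁,e₃⟧⟧`. -/
theorem stmt_12
    (W0 W1 : Type*)
    [NormedAddCommGroup W0] [NormedSpace ℝ W0] [FiniteDimensional ℝ W0]
    [NormedAddCommGroup W1] [NormedSpace ℝ W1] [FiniteDimensional ℝ W1]
    (B : W1 →ₗ[ℝ] W1 →ₗ[ℝ] ℝ)
    (hB : ∀ x y : W1, B x y = B y x)
    (d : W1 →L[ℝ] W0)
    (σ : (W0 →L[ℝ] ℝ) →ₗ[ℝ] W1)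
    (hσ : ∀ (ξ : W0 →L[ℝ] ℝ) (w : W1), B (σ ξ) w = ξ (d w))
    (hdσ : ∀ ξ : W0 →L[ℝ] ℝ, d (σ ξ) = 0)
    (e₁ e₂ e₃ : W0 → W1)
    (he₁ : ContDiff ℝ (⊤ : ℕ∞) e₁) (he₂ : ContDiff ℝ (⊤ : ℕ∞) e₂)
    (he₃ : ContDiff ℝ (⊤ : ℕ∞) e₃) :
    ∀ p : W0,
      courantBracket B d σ (courantBracket B d σ e₁ e₂) e₃ p
        = courantBracket B d σ e₁ (courantBracket B d σ e₂ e₃) p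
          - courantBracket B d σ e₂ (courantBracket B d σ e₁ e₃) p := by
  have hn : minSmoothness ℝ 2 ≤ (⊤ : ℕ∞) := by
    rw [minSmoothness_of_isRCLikeNormedField]
    exact WithTop.coe_le_coe.2 le_top
  simp only [courantBracket_eq_normedCourantBracket]
  exact fun p => stmt_12_general hn hB hσ hdσ he₁.contDiffAt he₂.contDiffAt he₃.contDiffAt
end

section
/- Let U₀ ⊆ W₀, U₁ ⊆ W₁, and U₂ ⊆ W₀* be subspaces with σ(U₂) ⊆ U₁ and ∂(U₁) ⊆ U₀, and set L₂ := U₂ × U₁ × U₁ × U₀ ⊆ V₂. Then the ω-orthogonal of L₂ satisfies {w ∈ V₂ : ω(w,u) = 0 for all u ∈ L₂} = Ann(U₀) × U₁^⊥ × U₁^⊥ × Ann(U₂). -/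
/-- The constant symplectic form on `V₂ = W₀* × W₁ × W₁ × W₀` of a symmetric constant
symplectic 2-groupoid:
`ω((ξ,x,y,m),(ξ',x',y',m')) = ξ(∂x' + ∂y' − m') − ⟨x, y' + σξ'⟩ + ⟨y, x' − σξ'⟩ + ξ'(m)`. -/
def symplecticForm2
    {W0 W1 : Type*}
    [AddCommGroup W0] [Module ℝ W0]
    [AddCommGroup W1] [Module ℝ W1]
    (B : W1 →ₗ[ℝ] W1 →ₗ[ℝ] ℝ)
    (d : W1 →ₗ[ℝ] W0)
    (σ : Module.Dual ℝ W0 →ₗ[ℝ] W1)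
    (w u : Module.Dual ℝ W0 × W1 × W1 × W0) : ℝ :=
  w.1 (d u.2.1 + d u.2.2.1 - u.2.2.2) - B w.2.1 (u.2.2.1 + σ u.1)
    + B w.2.2.1 (u.2.1 - σ u.1) + u.1 w.2.2.2

/-!
For `w = (ξ, x, y, m)`, collecting the terms of `ω(w, u)` by the component of `u` they involve
turns `ω(w, ·)` into the quadruple of functionals
`(m − (⟨x, ·⟩ + ⟨y, ·⟩) ∘ σ, ξ ∘ ∂ + ⟨y, ·⟩, ξ ∘ ∂ − ⟨x, ·⟩, −ξ)` on `W₀* × W₁ × W₁ × W₀`.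
It annihilates a product of subspaces exactly when each functional annihilates its factor.
This system of conditions is triangular: read from right to left, `ξ` annihilates `U₀`, so `ξ ∘ ∂`
annihilates `U₁` and drops out of the middle conditions, and then `(⟨x, ·⟩ + ⟨y, ·⟩) ∘ σ`
annihilates `U₂` and drops out of the first one.
-/

section DualAnnihilator

variable {R M N : Type*} [CommSemiring R]
  [AddCommMonoid M] [Module R M] [AddCommMonoid N] [Module R N]

theorem coprod_mem_dualAnnihilator_prod_iff {p : Submodule R M} {q : Submodule R N}
    {f : Module.Dual R M} {g : Module.Dual R N} :
    f.coprod g ∈ (p.prod q).dualAnnihilator ↔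
      f ∈ p.dualAnnihilator ∧ g ∈ q.dualAnnihilator := by
  simp only [Submodule.mem_dualAnnihilator, Submodule.mem_prod, Prod.forall,
    LinearMap.coprod_apply]
  refine ⟨fun h => ⟨fun a ha => ?_, fun b hb => ?_⟩, fun ⟨hf, hg⟩ a b ⟨ha, hb⟩ => ?_⟩
  · simpa using h a 0 ⟨ha, q.zero_mem⟩
  · simpa using h 0 b ⟨p.zero_mem, hb⟩
  · rw [hf a ha, hg b hb, add_zero]

theorem dualMap_mem_dualAnnihilator {p : Submodule R M} {q : Submodule R N} {f : M →ₗ[R] N}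
    (hpq : p ≤ q.comap f) {φ : Module.Dual R N} (hφ : φ ∈ q.dualAnnihilator) :
    f.dualMap φ ∈ p.dualAnnihilator :=
  Submodule.dualAnnihilator_anti hpq
    (q.dualAnnihilator_map_dualMap_le f (Submodule.mem_map_of_mem hφ))

theorem mem_orthogonalBilin_flip_iff {B : M →ₗ[R] N →ₗ[R] R} {p : Submodule R N} {x : M} :
    x ∈ p.orthogonalBilin B.flip ↔ B x ∈ p.dualAnnihilator := by
  simp only [Submodule.mem_orthogonalBilin_iff, LinearMap.flip_apply,
    Submodule.mem_dualAnnihilator]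

end DualAnnihilator

section ConstantTwoForm

variable {R W0 W1 : Type*} [CommRing R]
  [AddCommGroup W0] [Module R W0] [AddCommGroup W1] [Module R W1]
  (B : W1 →ₗ[R] W1 →ₗ[R] R) (d : W1 →ₗ[R] W0) (σ : Module.Dual R W0 →ₗ[R] W1)

/-- The 2-form `ω` on `V₂ = W₀* × W₁ × W₁ × W₀`, bundled as a bilinear map and with scalars in a
commutative ring, so that the orthogonal of `L₂` is a submodule; `d` stands for `∂`. -/
def constantTwoForm :
    (Module.Dual R W0 × W1 × W1 × W0) →ₗ[R] (Module.Dual R W0 × W1 × W1 × W0) →ₗ[R] R :=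
  LinearMap.mk₂ R
    (fun w u => w.1 (d u.2.1 + d u.2.2.1 - u.2.2.2) - B w.2.1 (u.2.2.1 + σ u.1)
      + B w.2.2.1 (u.2.1 - σ u.1) + u.1 w.2.2.2)
    (fun _ _ _ => by simp only [Prod.fst_add, Prod.snd_add, map_add, LinearMap.add_apply]; ring)
    (fun _ _ _ => by
      simp only [Prod.smul_fst, Prod.smul_snd, map_smul, LinearMap.smul_apply, smul_eq_mul]; ring)
    (fun _ _ _ => by
      simp only [Prod.fst_add, Prod.snd_add, map_add, map_sub, LinearMap.add_apply]; ring)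
    (fun _ _ _ => by
      simp only [Prod.smul_fst, Prod.smul_snd, map_smul, map_add, map_sub, LinearMap.smul_apply,
        smul_eq_mul]
      ring)

theorem constantTwoForm_eq_coprod (ξ : Module.Dual R W0) (x y : W1) (m : W0) :
    constantTwoForm B d σ (ξ, x, y, m) =
      (Module.Dual.eval R W0 m - σ.dualMap (B x + B y)).coprod
        ((d.dualMap ξ + B y).coprod ((d.dualMap ξ - B x).coprod (-ξ))) := by
  refine LinearMap.ext fun ⟨η, a, b, c⟩ => ?_
  simp only [constantTwoForm, LinearMap.mk₂_apply, LinearMap.coprod_apply, LinearMap.add_apply,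
    LinearMap.sub_apply, LinearMap.neg_apply, LinearMap.dualMap_apply, Module.Dual.eval_apply,
    map_add, map_sub]
  ring

theorem constantTwoForm_apply_eq_symplecticForm2 {W0 W1 : Type*}
    [AddCommGroup W0] [Module ℝ W0] [AddCommGroup W1] [Module ℝ W1]
    (B : W1 →ₗ[ℝ] W1 →ₗ[ℝ] ℝ) (d : W1 →ₗ[ℝ] W0) (σ : Module.Dual ℝ W0 →ₗ[ℝ] W1)
    (w u : Module.Dual ℝ W0 × W1 × W1 × W0) :
    constantTwoForm B d σ w u = symplecticForm2 B d σ w u :=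
  rfl

theorem stmt_14_general {U0 : Submodule R W0} {U1 : Submodule R W1}
    {U2 : Submodule R (Module.Dual R W0)} (hσU : U2 ≤ U1.comap σ) (hdU : U1 ≤ U0.comap d) :
    (U2.prod (U1.prod (U1.prod U0))).orthogonalBilin (constantTwoForm B d σ).flip =
      U0.dualAnnihilator.prod ((U1.orthogonalBilin B.flip).prod
        ((U1.orthogonalBilin B.flip).prod U2.dualCoannihilator)) := by
  ext ⟨ξ, x, y, m⟩
  simp only [mem_orthogonalBilin_flip_iff, constantTwoForm_eq_coprod,
    coprod_mem_dualAnnihilator_prod_iff, Submodule.mem_prod, Submodule.dualCoannihilator,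
    Submodule.mem_comap, neg_mem_iff]
  have eval_sub_mem_iff (hx : B x ∈ U1.dualAnnihilator) (hy : B y ∈ U1.dualAnnihilator) :
      Module.Dual.eval R W0 m - σ.dualMap (B x + B y) ∈ U2.dualAnnihilator ↔
        Module.Dual.eval R W0 m ∈ U2.dualAnnihilator :=
    Submodule.sub_mem_iff_left _ (dualMap_mem_dualAnnihilator hσU (add_mem hx hy))
  have comp_add_mem_iff (hξ : ξ ∈ U0.dualAnnihilator) :
      d.dualMap ξ + B y ∈ U1.dualAnnihilator ↔ B y ∈ U1.dualAnnihilator :=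
    Submodule.add_mem_iff_right _ (dualMap_mem_dualAnnihilator hdU hξ)
  have comp_sub_mem_iff (hξ : ξ ∈ U0.dualAnnihilator) :
      d.dualMap ξ - B x ∈ U1.dualAnnihilator ↔ B x ∈ U1.dualAnnihilator :=
    Submodule.sub_mem_iff_right _ (dualMap_mem_dualAnnihilator hdU hξ)
  tauto

end ConstantTwoForm

/-- for subspaces `U₀ ⊆ W₀`, `U₁ ⊆ W₁`, `U₂ ⊆ W₀*` with `σ(U₂) ⊆ U₁` and
`∂(U₁) ⊆ U₀`, the `ω`-orthogonal of `L₂ = U₂ × U₁ × U₁ × U₀` is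
`Ann(U₀) × U₁^⊥ × U₁^⊥ × Ann(U₂)`. -/
theorem stmt_14
    (W0 W1 : Type*)
    [AddCommGroup W0] [Module ℝ W0] [FiniteDimensional ℝ W0]
    [AddCommGroup W1] [Module ℝ W1] [FiniteDimensional ℝ W1]
    (B : W1 →ₗ[ℝ] W1 →ₗ[ℝ] ℝ)
    (hB : ∀ x y : W1, B x y = B y x)
    (d : W1 →ₗ[ℝ] W0)
    (σ : Module.Dual ℝ W0 →ₗ[ℝ] W1)
    (hσ : ∀ (ξ : Module.Dual ℝ W0) (w : W1), B (σ ξ) w = ξ (d w))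
    (hdσ : ∀ ξ : Module.Dual ℝ W0, d (σ ξ) = 0)
    (U0 : Submodule ℝ W0) (U1 : Submodule ℝ W1)
    (U2 : Submodule ℝ (Module.Dual ℝ W0))
    (hσU : ∀ ξ ∈ U2, σ ξ ∈ U1)
    (hdU : ∀ x ∈ U1, d x ∈ U0) :
    {w : Module.Dual ℝ W0 × W1 × W1 × W0 |
        ∀ u ∈ (U2 : Set (Module.Dual ℝ W0)) ×ˢ (U1 : Set W1) ×ˢ (U1 : Set W1) ×ˢ (U0 : Set W0),
          symplecticForm2 B d σ w u = 0}
      = {ξ : Module.Dual ℝ W0 | ∀ u ∈ U0, ξ u = 0}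
          ×ˢ {x : W1 | ∀ u ∈ U1, B x u = 0}
          ×ˢ {x : W1 | ∀ u ∈ U1, B x u = 0}
          ×ˢ {m : W0 | ∀ ξ ∈ U2, ξ m = 0} := by
  ext w
  simpa only [Set.mem_ofPred_eq, Set.mem_prod, SetLike.mem_coe, Submodule.mem_prod,
    Submodule.mem_orthogonalBilin_iff, LinearMap.flip_apply, Submodule.mem_dualAnnihilator,
    Submodule.mem_dualCoannihilator, constantTwoForm_apply_eq_symplecticForm2] using
    SetLike.ext_iff.mp (stmt_14_general B d σ hσU hdU) w
end

section
/- Let U₀ ⊆ W₀, U₁ ⊆ W₁, and U₂ ⊆ W₀* be subspaces with σ(U₂) ⊆ U₁ and ∂(U₁) ⊆ U₀, set L₂ := U₂ × U₁ × U₁ × U₀ ⊆ V₂, and let L₂^ω := {w ∈ V₂ : ω(w,u) = 0 for all u ∈ L₂}. Then: (1) L₂ ⊆ L₂^ω if and only if ξ(m) = 0 for all ξ ∈ U₂ and m ∈ U₀, and U₁ is isotropic (⟨u,u'⟩ = 0 for all u, u' ∈ U₁); (2) L₂^ω ⊆ L₂ if and only if Ann(U₂) ⊆ U₀, Ann(U₀)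 ⊆ U₂, and U₁^⊥ ⊆ U₁; (3) L₂^ω = L₂ if and only if U₂ = Ann(U₀) and U₁^⊥ = U₁. -/
/-!
The inclusions `σ U₂ ⊆ U₁` and `∂ U₁ ⊆ U₀` make the terms of `ω` that couple different factors
vanish as soon as the diagonal pairings do, so that
`L₂^ω = Ann(U₀) × U₁^⊥ × U₁^⊥ × Ann(U₂)`.
Comparing this product with `U₂ × U₁ × U₁ × U₀` factor by factor gives all three claims, since
`U₂ ⊆ Ann(U₀)` and `U₀ ⊆ Ann(U₂)` are equivalent and, over a field, `U₂ = Ann(U₀)` implies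
`Ann(U₂) = U₀`.
-/

open Module Submodule

section CommRing

variable {R M₀ M₁ : Type*} [CommRing R] [AddCommGroup M₀] [Module R M₀]
  [AddCommGroup M₁] [Module R M₁]

/-- The form `ω` on `M₀* × M₁ × M₁ × M₀` over a commutative ring, as a bilinear map. It is defined
for arbitrary `B`, `d` and `σ`, and so need not be alternating. -/
def symplecticBilin (B : M₁ →ₗ[R] M₁ →ₗ[R] R) (d : M₁ →ₗ[R] M₀) (σ : Dual R M₀ →ₗ[R] M₁) :
    (Dual R M₀ × M₁ × M₁ × M₀) →ₗ[R] (Dual R M₀ × M₁ × M₁ × M₀) →ₗ[R] R :=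
  LinearMap.mk₂ R
    (fun w u ↦ w.1 (d u.2.1 + d u.2.2.1 - u.2.2.2) - B w.2.1 (u.2.2.1 + σ u.1)
      + B w.2.2.1 (u.2.1 - σ u.1) + u.1 w.2.2.2)
    (fun w w' u ↦ by
      simp only [Prod.fst_add, Prod.snd_add, map_add, LinearMap.add_apply]; ring)
    (fun c w u ↦ by
      simp only [Prod.smul_fst, Prod.smul_snd, map_smul, LinearMap.smul_apply, smul_eq_mul]; ring)
    (fun w u u' ↦ by
      simp only [Prod.fst_add, Prod.snd_add, map_add, map_sub, LinearMap.add_apply]; ring)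
    (fun c w u ↦ by
      simp only [Prod.smul_fst, Prod.smul_snd, map_add, map_sub, map_smul, LinearMap.smul_apply,
        smul_eq_mul]
      ring)

theorem symplecticBilin_apply (B : M₁ →ₗ[R] M₁ →ₗ[R] R) (d : M₁ →ₗ[R] M₀)
    (σ : Dual R M₀ →ₗ[R] M₁) (w u : Dual R M₀ × M₁ × M₁ × M₀) :
    symplecticBilin B d σ w u =
      w.1 (d u.2.1 + d u.2.2.1 - u.2.2.2) - B w.2.1 (u.2.2.1 + σ u.1)
        + B w.2.2.1 (u.2.1 - σ u.1) + u.1 w.2.2.2 :=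
  rfl

/-- The submodule `L₂ = U₂ × U₁ × U₁ × U₀` of `M₀* × M₁ × M₁ × M₀`. -/
def levelTwo (U₂ : Submodule R (Dual R M₀)) (U₁ : Submodule R M₁) (U₀ : Submodule R M₀) :
    Submodule R (Dual R M₀ × M₁ × M₁ × M₀) :=
  U₂.prod (U₁.prod (U₁.prod U₀))

variable {B : M₁ →ₗ[R] M₁ →ₗ[R] R} {d : M₁ →ₗ[R] M₀} {σ : Dual R M₀ →ₗ[R] M₁}
  {U₀ U₀' : Submodule R M₀} {U₁ U₁' : Submodule R M₁} {U₂ U₂' : Submodule R (Dual R M₀)}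

theorem mem_levelTwo {w : Dual R M₀ × M₁ × M₁ × M₀} :
    w ∈ levelTwo U₂ U₁ U₀ ↔ w.1 ∈ U₂ ∧ w.2.1 ∈ U₁ ∧ w.2.2.1 ∈ U₁ ∧ w.2.2.2 ∈ U₀ :=
  Iff.rfl

theorem levelTwo_le_levelTwo_iff :
    levelTwo U₂ U₁ U₀ ≤ levelTwo U₂' U₁' U₀' ↔ U₂ ≤ U₂' ∧ U₁ ≤ U₁' ∧ U₀ ≤ U₀' := by
  refine ⟨fun h ↦ ⟨fun ξ hξ ↦ ?_, fun x hx ↦ ?_, fun m hm ↦ ?_⟩, fun ⟨h₂, h₁, h₀⟩ ↦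
    prod_mono h₂ (prod_mono h₁ (prod_mono h₁ h₀))⟩
  · exact (@h (ξ, 0, 0, 0) ⟨hξ, zero_mem _, zero_mem _, zero_mem _⟩).1
  · exact (@h (0, x, 0, 0) ⟨zero_mem _, hx, zero_mem _, zero_mem _⟩).2.1
  · exact (@h (0, 0, 0, m) ⟨zero_mem _, zero_mem _, zero_mem _, hm⟩).2.2.2

theorem levelTwo_inj :
    levelTwo U₂ U₁ U₀ = levelTwo U₂' U₁' U₀' ↔ U₂ = U₂' ∧ U₁ = U₁' ∧ U₀ = U₀' := by
  simp only [le_antisymm_iff, levelTwo_le_levelTwo_iff]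
  tauto

-- Mathlib's orthogonal is the right one; flipping the form gives `{w | ∀ u ∈ L₂, ω(w, u) = 0}`.
theorem orthogonalBilin_levelTwo (hσ : U₂ ≤ U₁.comap σ) (hd : U₁ ≤ U₀.comap d) :
    (levelTwo U₂ U₁ U₀).orthogonalBilin (symplecticBilin B d σ).flip =
      levelTwo U₀.dualAnnihilator (U₁.orthogonalBilin B.flip) U₂.dualCoannihilator := by
  ext ⟨ξ, x, y, m⟩
  simp only [mem_orthogonalBilin_iff, mem_levelTwo, mem_dualAnnihilator,
    mem_dualCoannihilator, LinearMap.flip_apply, Prod.forall, symplecticBilin_apply]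
  constructor
  · intro h
    have hξ : ∀ u ∈ U₀, ξ u = 0 := fun u hu ↦ by
      simpa using h 0 0 0 u ⟨zero_mem _, zero_mem _, zero_mem _, hu⟩
    have hx : ∀ u ∈ U₁, B x u = 0 := fun u hu ↦ by
      simpa [hξ _ (hd hu)] using h 0 0 u 0 ⟨zero_mem _, zero_mem _, hu, zero_mem _⟩
    have hy : ∀ u ∈ U₁, B y u = 0 := fun u hu ↦ by
      simpa [hξ _ (hd hu)] using h 0 u 0 0 ⟨zero_mem _, hu, zero_mem _, zero_mem _⟩
    have hm : ∀ η ∈ U₂, η m = 0 := fun η hη ↦ by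
      simpa [hx _ (hσ hη), hy _ (hσ hη)] using
        h η 0 0 0 ⟨hη, zero_mem _, zero_mem _, zero_mem _⟩
    exact ⟨hξ, hx, hy, hm⟩
  · rintro ⟨hξ, hx, hy, hm⟩ η x' y' m' ⟨hη, hx', hy', hm'⟩
    rw [hξ _ (sub_mem (add_mem (hd hx') (hd hy')) hm'), hx _ (add_mem hy' (hσ hη)),
      hy _ (sub_mem hx' (hσ hη)), hm η hη, sub_zero, add_zero, add_zero]

theorem levelTwo_le_orthogonalBilin_iff (hσ : U₂ ≤ U₁.comap σ) (hd : U₁ ≤ U₀.comap d) :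
    levelTwo U₂ U₁ U₀ ≤ (levelTwo U₂ U₁ U₀).orthogonalBilin (symplecticBilin B d σ).flip ↔
      U₂ ≤ U₀.dualAnnihilator ∧ U₁ ≤ U₁.orthogonalBilin B.flip := by
  rw [orthogonalBilin_levelTwo hσ hd, levelTwo_le_levelTwo_iff,
    ← le_dualAnnihilator_iff_le_dualCoannihilator]
  tauto

theorem orthogonalBilin_levelTwo_le_iff (hσ : U₂ ≤ U₁.comap σ) (hd : U₁ ≤ U₀.comap d) :
    (levelTwo U₂ U₁ U₀).orthogonalBilin (symplecticBilin B d σ).flip ≤ levelTwo U₂ U₁ U₀ ↔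
      U₂.dualCoannihilator ≤ U₀ ∧ U₀.dualAnnihilator ≤ U₂ ∧ U₁.orthogonalBilin B.flip ≤ U₁ := by
  rw [orthogonalBilin_levelTwo hσ hd, levelTwo_le_levelTwo_iff]
  tauto

end CommRing

section Field

variable {K W₀ W₁ : Type*} [Field K] [AddCommGroup W₀] [Module K W₀] [AddCommGroup W₁] [Module K W₁]
  {B : W₁ →ₗ[K] W₁ →ₗ[K] K} {d : W₁ →ₗ[K] W₀} {σ : Dual K W₀ →ₗ[K] W₁}
  {U₀ : Submodule K W₀} {U₁ : Submodule K W₁} {U₂ : Submodule K (Dual K W₀)}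

theorem orthogonalBilin_levelTwo_eq_iff (hσ : U₂ ≤ U₁.comap σ) (hd : U₁ ≤ U₀.comap d) :
    (levelTwo U₂ U₁ U₀).orthogonalBilin (symplecticBilin B d σ).flip = levelTwo U₂ U₁ U₀ ↔
      U₂ = U₀.dualAnnihilator ∧ U₁.orthogonalBilin B.flip = U₁ := by
  rw [orthogonalBilin_levelTwo hσ hd, levelTwo_inj]
  constructor
  · rintro ⟨h₂, h₁, -⟩
    exact ⟨h₂.symm, h₁⟩
  · rintro ⟨rfl, h₁⟩
    exact ⟨rfl, h₁, Subspace.dualAnnihilator_dualCoannihilator_eq⟩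

theorem stmt_15_general (hσ : U₂ ≤ U₁.comap σ) (hd : U₁ ≤ U₀.comap d) :
    (levelTwo U₂ U₁ U₀ ≤ (levelTwo U₂ U₁ U₀).orthogonalBilin (symplecticBilin B d σ).flip ↔
      U₂ ≤ U₀.dualAnnihilator ∧ U₁ ≤ U₁.orthogonalBilin B.flip) ∧
    ((levelTwo U₂ U₁ U₀).orthogonalBilin (symplecticBilin B d σ).flip ≤ levelTwo U₂ U₁ U₀ ↔
      U₂.dualCoannihilator ≤ U₀ ∧ U₀.dualAnnihilator ≤ U₂ ∧ U₁.orthogonalBilin B.flip ≤ U₁) ∧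
    ((levelTwo U₂ U₁ U₀).orthogonalBilin (symplecticBilin B d σ).flip = levelTwo U₂ U₁ U₀ ↔
      U₂ = U₀.dualAnnihilator ∧ U₁.orthogonalBilin B.flip = U₁) :=
  ⟨levelTwo_le_orthogonalBilin_iff hσ hd, orthogonalBilin_levelTwo_le_iff hσ hd,
    orthogonalBilin_levelTwo_eq_iff hσ hd⟩

end Field

/-- with `L₂ = U₂ × U₁ × U₁ × U₀` and `L₂^ω` its `ω`-orthogonal:
(1) `L₂ ⊆ L₂^ω` iff `U₂` and `U₀` pair to zero and `U₁` is isotropic;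
(2) `L₂^ω ⊆ L₂` iff `Ann(U₂) ⊆ U₀`, `Ann(U₀) ⊆ U₂` and `U₁^⊥ ⊆ U₁`;
(3) `L₂^ω = L₂` iff `U₂ = Ann(U₀)` and `U₁^⊥ = U₁`. -/
theorem stmt_15
    (W0 W1 : Type*)
    [AddCommGroup W0] [Module ℝ W0] [FiniteDimensional ℝ W0]
    [AddCommGroup W1] [Module ℝ W1] [FiniteDimensional ℝ W1]
    (B : W1 →ₗ[ℝ] W1 →ₗ[ℝ] ℝ)
    (hB : ∀ x y : W1, B x y = B y x)
    (d : W1 →ₗ[ℝ] W0)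
    (σ : Module.Dual ℝ W0 →ₗ[ℝ] W1)
    (hσ : ∀ (ξ : Module.Dual ℝ W0) (w : W1), B (σ ξ) w = ξ (d w))
    (hdσ : ∀ ξ : Module.Dual ℝ W0, d (σ ξ) = 0)
    (U0 : Submodule ℝ W0) (U1 : Submodule ℝ W1)
    (U2 : Submodule ℝ (Module.Dual ℝ W0))
    (hσU : ∀ ξ ∈ U2, σ ξ ∈ U1)
    (hdU : ∀ x ∈ U1, d x ∈ U0) :
    -- (1) L₂ is isotropic iff U₂, U₀ pair to zero and U₁ is isotropic
    (((U2 : Set (Module.Dual ℝ W0)) ×ˢ (U1 : Set W1) ×ˢ (U1 : Set W1) ×ˢ (U0 : Set W0)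
        ⊆ {w : Module.Dual ℝ W0 × W1 × W1 × W0 |
            ∀ u ∈ (U2 : Set (Module.Dual ℝ W0)) ×ˢ (U1 : Set W1) ×ˢ (U1 : Set W1) ×ˢ (U0 : Set W0),
              symplecticForm2 B d σ w u = 0})
      ↔ ((∀ ξ ∈ U2, ∀ m ∈ U0, ξ m = 0) ∧ (∀ u ∈ U1, ∀ u' ∈ U1, B u u' = 0)))
    -- (2) L₂ is coisotropic iff Ann(U₂) ⊆ U₀, Ann(U₀) ⊆ U₂ and U₁^⊥ ⊆ U₁
    ∧ (({w : Module.Dual ℝ W0 × W1 × W1 × W0 |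
            ∀ u ∈ (U2 : Set (Module.Dual ℝ W0)) ×ˢ (U1 : Set W1) ×ˢ (U1 : Set W1) ×ˢ (U0 : Set W0),
              symplecticForm2 B d σ w u = 0}
          ⊆ (U2 : Set (Module.Dual ℝ W0)) ×ˢ (U1 : Set W1) ×ˢ (U1 : Set W1) ×ˢ (U0 : Set W0))
      ↔ ({m : W0 | ∀ ξ ∈ U2, ξ m = 0} ⊆ (U0 : Set W0)
          ∧ {ξ : Module.Dual ℝ W0 | ∀ u ∈ U0, ξ u = 0} ⊆ (U2 : Set (Module.Dual ℝ W0))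
          ∧ {x : W1 | ∀ u ∈ U1, B x u = 0} ⊆ (U1 : Set W1)))
    -- (3) L₂ is Lagrangian iff U₂ = Ann(U₀) and U₁^⊥ = U₁
    ∧ (({w : Module.Dual ℝ W0 × W1 × W1 × W0 |
            ∀ u ∈ (U2 : Set (Module.Dual ℝ W0)) ×ˢ (U1 : Set W1) ×ˢ (U1 : Set W1) ×ˢ (U0 : Set W0),
              symplecticForm2 B d σ w u = 0}
          = (U2 : Set (Module.Dual ℝ W0)) ×ˢ (U1 : Set W1) ×ˢ (U1 : Set W1) ×ˢ (U0 : Set W0))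
      ↔ ((U2 : Set (Module.Dual ℝ W0)) = {ξ : Module.Dual ℝ W0 | ∀ u ∈ U0, ξ u = 0}
          ∧ {x : W1 | ∀ u ∈ U1, B x u = 0} = (U1 : Set W1))) := by
  simpa only [Set.subset_def, Set.ext_iff, Set.mem_ofPred_eq, Set.mem_prod, SetLike.mem_coe,
    SetLike.le_def, SetLike.ext_iff, mem_levelTwo, mem_orthogonalBilin_iff, mem_dualAnnihilator,
    mem_dualCoannihilator, LinearMap.flip_apply, symplecticBilin_apply, symplecticForm2]
    using stmt_15_general (B := B) hσU hdU
end

section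
/- (Construction of linear Lagrangian sub-2-groupoids from Lagrangian pairs.) Let U₁ ⊆ W₁ be a subspace with U₁^⊥ = U₁ and let U₀ ⊆ W₀ be a subspace with ∂(U₁) ⊆ U₀. Then σ(Ann(U₀)) ⊆ U₁, and the subspace L₂ := Ann(U₀) × U₁ × U₁ × U₀ ⊆ V₂ is Lagrangian: {w ∈ V₂ : ω(w,u) = 0 for all u ∈ L₂} = L₂. -/
/-!
If `∂(U₁) ⊆ U₀`, then `⟨σξ, u⟩ = ξ(∂u) = 0` for `ξ ∈ Ann(U₀)` and `u ∈ U₁`, so `σ(Ann(U₀)) ⊆ U₁^⊥`.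
If moreover `σ(Ann(U₀)) ⊆ U₁`, testing `(ξ, x, y, m)` against the four factors of `L₂` in the right
order yields `L₂^ω = Ann(U₀) × U₁^⊥ × U₁^⊥ × Ann(Ann(U₀))`: the last factor gives `ξ ∈ Ann(U₀)`,
which removes `ξ(∂x' + ∂y')` when the middle two are used, and `x, y ∈ U₁^⊥` in turn removes the
terms in `σξ'` when the first is used. Over a field `Ann(Ann(U₀)) = U₀`.
-/

section CommRing

variable {R M₀ M₁ : Type*} [CommRing R] [AddCommGroup M₀] [Module R M₀]
  [AddCommGroup M₁] [Module R M₁]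

/-- The form `symplecticForm2` over an arbitrary commutative ring, bundled as a bilinear map `ω` so
that orthogonal submodules can be taken. As `orthogonalBilin` quantifies over the first argument,
`{w | ∀ u ∈ L, ω w u = 0}` is `L.orthogonalBilin ω.flip`. -/
def twoGroupoidForm (B : M₁ →ₗ[R] M₁ →ₗ[R] R) (d : M₁ →ₗ[R] M₀) (σ : Module.Dual R M₀ →ₗ[R] M₁) :
    (Module.Dual R M₀ × M₁ × M₁ × M₀) →ₗ[R] (Module.Dual R M₀ × M₁ × M₁ × M₀) →ₗ[R] R :=
  LinearMap.mk₂ R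
    (fun w u ↦ w.1 (d u.2.1 + d u.2.2.1 - u.2.2.2) - B w.2.1 (u.2.2.1 + σ u.1)
      + B w.2.2.1 (u.2.1 - σ u.1) + u.1 w.2.2.2)
    (fun _ _ _ ↦ by simp; ring) (fun _ _ _ ↦ by simp; ring)
    (fun _ _ _ ↦ by simp; ring) (fun _ _ _ ↦ by simp; ring)

@[simp]
lemma twoGroupoidForm_apply (B : M₁ →ₗ[R] M₁ →ₗ[R] R) (d : M₁ →ₗ[R] M₀)
    (σ : Module.Dual R M₀ →ₗ[R] M₁) (w u : Module.Dual R M₀ × M₁ × M₁ × M₀) :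
    twoGroupoidForm B d σ w u =
      w.1 (d u.2.1 + d u.2.2.1 - u.2.2.2) - B w.2.1 (u.2.2.1 + σ u.1)
        + B w.2.2.1 (u.2.1 - σ u.1) + u.1 w.2.2.2 :=
  rfl

/-- The submodule `L₂ = Ann(U₀) × U₁ × U₁ × U₀` of `V₂` attached to the pair `(U₀, U₁)`. -/
def subTwoGroupoid (U₀ : Submodule R M₀) (U₁ : Submodule R M₁) :
    Submodule R (Module.Dual R M₀ × M₁ × M₁ × M₀) :=
  U₀.dualAnnihilator.prod (U₁.prod (U₁.prod U₀))

lemma mem_subTwoGroupoid {U₀ : Submodule R M₀} {U₁ : Submodule R M₁}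
    {w : Module.Dual R M₀ × M₁ × M₁ × M₀} :
    w ∈ subTwoGroupoid U₀ U₁ ↔
      w.1 ∈ U₀.dualAnnihilator ∧ w.2.1 ∈ U₁ ∧ w.2.2.1 ∈ U₁ ∧ w.2.2.2 ∈ U₀ :=
  Iff.rfl

variable {B : M₁ →ₗ[R] M₁ →ₗ[R] R} {d : M₁ →ₗ[R] M₀} {σ : Module.Dual R M₀ →ₗ[R] M₁}
  {U₀ : Submodule R M₀} {U₁ : Submodule R M₁}

lemma dualAnnihilator_le_comap_orthogonalBilin (hσ : ∀ ξ w, B (σ ξ) w = ξ (d w))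
    (hd : U₁ ≤ U₀.comap d) :
    U₀.dualAnnihilator ≤ (U₁.orthogonalBilin B.flip).comap σ := by
  intro ξ hξ u hu
  calc B (σ ξ) u = ξ (d u) := hσ ξ u
    _ = 0 := (Submodule.mem_dualAnnihilator ξ).1 hξ (d u) (hd hu)

lemma orthogonalBilin_subTwoGroupoid (hd : U₁ ≤ U₀.comap d)
    (hσ : U₀.dualAnnihilator ≤ U₁.comap σ) :
    (subTwoGroupoid U₀ U₁).orthogonalBilin (twoGroupoidForm B d σ).flip =
      U₀.dualAnnihilator.prod ((U₁.orthogonalBilin B.flip).prod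
        ((U₁.orthogonalBilin B.flip).prod U₀.dualAnnihilator.dualCoannihilator)) := by
  apply le_antisymm
  · rintro ⟨ξ, x, y, m⟩ h
    have ann_ξ : ∀ n ∈ U₀, ξ n = 0 := fun n hn ↦ by
      simpa using h (0, 0, 0, n) (by simp [mem_subTwoGroupoid, hn])
    have orth_x : ∀ u ∈ U₁, B x u = 0 := fun u hu ↦ by
      simpa [ann_ξ _ (hd hu)] using h (0, 0, u, 0) (by simp [mem_subTwoGroupoid, hu])
    have orth_y : ∀ u ∈ U₁, B y u = 0 := fun u hu ↦ by
      simpa [ann_ξ _ (hd hu)] using h (0, u, 0, 0) (by simp [mem_subTwoGroupoid, hu])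
    have coann_m : ∀ η ∈ U₀.dualAnnihilator, η m = 0 := fun η hη ↦ by
      simpa [orth_x _ (hσ hη), orth_y _ (hσ hη)] using
        h (η, 0, 0, 0) ⟨hη, U₁.zero_mem, U₁.zero_mem, U₀.zero_mem⟩
    exact ⟨(Submodule.mem_dualAnnihilator ξ).2 ann_ξ, orth_x, orth_y,
      (Submodule.mem_dualCoannihilator m).2 coann_m⟩
  · rintro ⟨ξ, x, y, m⟩ ⟨hξ, orth_x, orth_y, hm⟩ ⟨η, x', y', n⟩ ⟨hη, hx', hy', hn⟩
    have ξ_eq_zero : ξ (d x' + d y' - n) = 0 :=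
      (Submodule.mem_dualAnnihilator ξ).1 hξ _
        (U₀.sub_mem (U₀.add_mem (hd hx') (hd hy')) hn)
    have x_eq_zero : B x (y' + σ η) = 0 := orth_x _ (U₁.add_mem hy' (hσ hη))
    have y_eq_zero : B y (x' - σ η) = 0 := orth_y _ (U₁.sub_mem hx' (hσ hη))
    have m_eq_zero : η m = 0 := (Submodule.mem_dualCoannihilator m).1 hm η hη
    change ξ (d x' + d y' - n) - B x (y' + σ η) + B y (x' - σ η) + η m = 0
    simp only [ξ_eq_zero, x_eq_zero, y_eq_zero, m_eq_zero, sub_zero, add_zero]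

end CommRing

theorem stmt_16_general {K W₀ W₁ : Type*} [Field K] [AddCommGroup W₀] [Module K W₀]
    [AddCommGroup W₁] [Module K W₁] (B : W₁ →ₗ[K] W₁ →ₗ[K] K) (d : W₁ →ₗ[K] W₀)
    (σ : Module.Dual K W₀ →ₗ[K] W₁) (hσ : ∀ ξ w, B (σ ξ) w = ξ (d w))
    (U₀ : Submodule K W₀) (U₁ : Submodule K W₁)
    (hU₁ : U₁.orthogonalBilin B.flip = U₁) (hd : U₁ ≤ U₀.comap d) :
    U₀.dualAnnihilator ≤ U₁.comap σ ∧
      (subTwoGroupoid U₀ U₁).orthogonalBilin (twoGroupoidForm B d σ).flip =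
        subTwoGroupoid U₀ U₁ := by
  have hσU : U₀.dualAnnihilator ≤ U₁.comap σ := by
    simpa only [hU₁] using dualAnnihilator_le_comap_orthogonalBilin hσ hd
  refine ⟨hσU, ?_⟩
  rw [orthogonalBilin_subTwoGroupoid hd hσU, hU₁, Subspace.dualAnnihilator_dualCoannihilator_eq,
    subTwoGroupoid]

/-- construction of linear Lagrangian sub-2-groupoids from Lagrangian
pairs: if `U₁^⊥ = U₁` and `∂(U₁) ⊆ U₀`, then `σ(Ann(U₀)) ⊆ U₁` and the subspace
`L₂ = Ann(U₀) × U₁ × U₁ × U₀ ⊆ V₂` is Lagrangian for `ω`. -/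
theorem stmt_16
    (W0 W1 : Type*)
    [AddCommGroup W0] [Module ℝ W0] [FiniteDimensional ℝ W0]
    [AddCommGroup W1] [Module ℝ W1] [FiniteDimensional ℝ W1]
    (B : W1 →ₗ[ℝ] W1 →ₗ[ℝ] ℝ)
    (hB : ∀ x y : W1, B x y = B y x)
    (d : W1 →ₗ[ℝ] W0)
    (σ : Module.Dual ℝ W0 →ₗ[ℝ] W1)
    (hσ : ∀ (ξ : Module.Dual ℝ W0) (w : W1), B (σ ξ) w = ξ (d w))
    (hdσ : ∀ ξ : Module.Dual ℝ W0, d (σ ξ) = 0)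
    (U0 : Submodule ℝ W0) (U1 : Submodule ℝ W1)
    (hU1 : {x : W1 | ∀ u ∈ U1, B x u = 0} = (U1 : Set W1))
    (hdU : ∀ x ∈ U1, d x ∈ U0) :
    (∀ ξ : Module.Dual ℝ W0, (∀ u ∈ U0, ξ u = 0) → σ ξ ∈ U1)
    ∧ ({w : Module.Dual ℝ W0 × W1 × W1 × W0 |
          ∀ u ∈ {ξ : Module.Dual ℝ W0 | ∀ m ∈ U0, ξ m = 0}
              ×ˢ (U1 : Set W1) ×ˢ (U1 : Set W1) ×ˢ (U0 : Set W0),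
            symplecticForm2 B d σ w u = 0}
        = {ξ : Module.Dual ℝ W0 | ∀ m ∈ U0, ξ m = 0}
            ×ˢ (U1 : Set W1) ×ˢ (U1 : Set W1) ×ˢ (U0 : Set W0)) := by
  simpa [SetLike.ext_iff, Set.ext_iff, SetLike.le_def, mem_subTwoGroupoid, symplecticForm2] using
    stmt_16_general B d σ hσ U0 U1 (SetLike.coe_injective hU1) hdU
end

section
/- (Closure of constant Dirac structures under the constant Courant bracket.) Let U₁ ⊆ W₁ be a subspace with U₁^⊥ = U₁, where U₁^⊥ := {x ∈ W₁ : ⟨x,u⟩ = 0 for all u ∈ U₁}. If e₁, e₂ : W₀ → W₁ are smooth maps with e₁(p) ∈ U₁ and e₂(p) ∈ U₁ for all p ∈ W₀, then ⟦e₁,e₂⟧(p) ∈ U₁ for all p ∈ W₀. -/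
open Filter Topology

theorem hasFDerivAt_apply_mem_of_eventually_mem
    {𝕜 E F : Type*} [NontriviallyNormedField 𝕜]
    [NormedAddCommGroup E] [NormedSpace 𝕜 E] [NormedAddCommGroup F] [NormedSpace 𝕜 F]
    {U : Submodule 𝕜 F} (hU : IsClosed (U : Set F)) {f : E → F} {f' : E →L[𝕜] F} {x : E}
    (hf : HasFDerivAt f f' x) (hfU : ∀ᶠ y in 𝓝 x, f y ∈ U) (v : E) :
    f' v ∈ U := by
  have hline : Tendsto (fun t : 𝕜 ↦ x + t • v) (𝓝[≠] 0) (𝓝 x) :=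
    (Continuous.tendsto' (by fun_prop) 0 x (by simp)).mono_left nhdsWithin_le_nhds
  have hquotient : ∀ᶠ t : 𝕜 in 𝓝[≠] 0, t⁻¹ • (f (x + t • v) - f x) ∈ U :=
    (hline.eventually hfU).mono fun t ht ↦ U.smul_mem t⁻¹ (U.sub_mem ht hfU.self_of_nhds)
  exact hU.mem_of_tendsto (hf.hasLineDerivAt v).tendsto_slope_zero hquotient

theorem stmt_17_general
    {W0 W1 : Type*}
    [NormedAddCommGroup W0] [NormedSpace ℝ W0] [FiniteDimensional ℝ W0]
    [NormedAddCommGroup W1] [NormedSpace ℝ W1] [FiniteDimensional ℝ W1]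
    {B : W1 →ₗ[ℝ] W1 →ₗ[ℝ] ℝ} {d : W1 →L[ℝ] W0} {σ : (W0 →L[ℝ] ℝ) →ₗ[ℝ] W1}
    (hσ : ∀ (ξ : W0 →L[ℝ] ℝ) (w : W1), B (σ ξ) w = ξ (d w))
    {U1 : Submodule ℝ W1} (hU1 : ∀ x : W1, (∀ u ∈ U1, B x u = 0) ↔ x ∈ U1)
    {e₁ e₂ : W0 → W1} {p : W0}
    (he₁ : DifferentiableAt ℝ e₁ p) (he₂ : DifferentiableAt ℝ e₂ p)
    (he₁U : ∀ᶠ q in 𝓝 p, e₁ q ∈ U1) (he₂U : ∀ᶠ q in 𝓝 p, e₂ q ∈ U1) :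
    courantBracket B d σ e₁ e₂ p ∈ U1 := by
  have hclosed : IsClosed (U1 : Set W1) := U1.closed_of_finiteDimensional
  have hDe₁ : ∀ v, fderiv ℝ e₁ p v ∈ U1 :=
    hasFDerivAt_apply_mem_of_eventually_mem hclosed he₁.hasFDerivAt he₁U
  have hDe₂ : ∀ v, fderiv ℝ e₂ p v ∈ U1 :=
    hasFDerivAt_apply_mem_of_eventually_mem hclosed he₂.hasFDerivAt he₂U
  have hisotropic : ∀ v, B (e₂ p) (fderiv ℝ e₁ p v) = 0 := fun v ↦
    (hU1 (e₂ p)).2 he₂U.self_of_nhds _ (hDe₁ v)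
  have hσ_mem : σ (LinearMap.toContinuousLinearMap
      (B (e₂ p) ∘ₗ (fderiv ℝ e₁ p : W0 →ₗ[ℝ] W1))) ∈ U1 :=
    (hU1 _).1 fun u _ ↦ (hσ _ u).trans (hisotropic (d u))
  exact U1.add_mem (U1.sub_mem (hDe₂ _) (hDe₁ _)) hσ_mem

/-- closure of constant Dirac structures under the constant Courant
bracket: if `U₁^⊥ = U₁` and `e₁, e₂` are smooth maps taking values in `U₁`, then
`⟦e₁,e₂⟧` takes values in `U₁`. -/
theorem stmt_17
    (W0 W1 : Type*)
    [NormedAddCommGroup W0] [NormedSpace ℝ W0] [FiniteDimensional ℝ W0]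
    [NormedAddCommGroup W1] [NormedSpace ℝ W1] [FiniteDimensional ℝ W1]
    (B : W1 →ₗ[ℝ] W1 →ₗ[ℝ] ℝ)
    (hB : ∀ x y : W1, B x y = B y x)
    (d : W1 →L[ℝ] W0)
    (σ : (W0 →L[ℝ] ℝ) →ₗ[ℝ] W1)
    (hσ : ∀ (ξ : W0 →L[ℝ] ℝ) (w : W1), B (σ ξ) w = ξ (d w))
    (hdσ : ∀ ξ : W0 →L[ℝ] ℝ, d (σ ξ) = 0)
    (U1 : Submodule ℝ W1)
    (hU1 : ∀ x : W1, (∀ u ∈ U1, B x u = 0) ↔ x ∈ U1)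
    (e₁ e₂ : W0 → W1)
    (he₁ : ContDiff ℝ (⊤ : ℕ∞) e₁) (he₂ : ContDiff ℝ (⊤ : ℕ∞) e₂)
    (he₁U : ∀ p : W0, e₁ p ∈ U1) (he₂U : ∀ p : W0, e₂ p ∈ U1) :
    ∀ p : W0, courantBracket B d σ e₁ e₂ p ∈ U1 := fun _ ↦
  stmt_17_general hσ hU1 (he₁.differentiable (by simp) _) (he₂.differentiable (by simp) _)
    (.of_forall he₁U) (.of_forall he₂U)
end
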